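/- arXiv:math/0611310 — 2 statements merged into one kernel-verified Lean document; each statement's English description precedes it below -/
import Mathlib

section
/- Let (A,ω,τ,G) be an ergodic C*-dynamical system with ω tracial, where G is a countable second countable topological group, Σ its Borel σ-algebra, μ the counting measure, and (g,h,j,k) ↦ ω(τ_h(a₁) τ_g(a₂) τ_{gh}(a₃) τ_{jk}(a₄) τ_j(a₅) τ_k(a₆)) is Σ² × Σ²-measurable for all a₁,...,a₆ ∈ A. Assume there exist uniform Følner sequences (Λ_{1,n}) and (Λ_{2,n}) in G satisfying the Tempel'man condition and such that (Λ_{1,n}⁻¹Λ_{1,n}) and (Λ_{2,n}⁻¹Λ_{2,n}) are also Følner in G. Fix a GNS representation of (A,ω) and a, b, c ∈ A with at least one of ι(a), ι(b), ι(c*) in H_v, and set x_{g,h} := ι(τ_{gh}(a) τ_g(b) τ_h(c)). If (A,ω,τ,G) is uniformly asymptotically abelian with respect to (Λ_{1,n}), then lim_{n→∞} sup_{g₁,g₂ ∈ G} ‖ (1/(μ(Λ_{1,n})μ(Λ_{2,n}))) Σ_{h ∈ Λ_{1,n}g₁} Σ_{g ∈ Λ_{2,n}g₂} x_{g,h} ‖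 = 0. -/
open MeasureTheory Filter Topology
open scoped Pointwise ComplexOrder

/-- The space `H_v` of flight vectors: the orthogonal complement of the closed span `H₀` of
the unimodular eigenvectors of the semigroup `S = {U g : g ∈ G}` of contractions. -/
noncomputable def flightVectors {G H : Type*} [NormedAddCommGroup H]
    [InnerProductSpace ℂ H] (U : G → H →L[ℂ] H) : Submodule ℂ H :=
  ((Submodule.span ℂ {x : H | x ≠ 0 ∧ ∃ lam : G → ℂ,
      ∀ g, ‖lam g‖ = 1 ∧ U g x = lam g • x}).topologicalClosure)ᗮ

/-!
For `y` of bounded norm, the average of `U_g y` over `g ∈ Λ₂ n g₂` is, up to a uniformly small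
error, no longer than the average of `U_k y` over a fixed finite set `K`. Apply this to
`y = ι(τ_h(a) b)` and average the squares over `h`. The trace property turns the inner product of
`U_k y` and `U_l y` into a correlation between `τ_l(b) τ_k(b)*` and
`τ_h(τ_k(a)* τ_l(a))`, so by ergodicity the mean over `h` tends to the product of the
`(k, l)`-correlations of `a` and of `b`, uniformly in `g₁`.

If `K` is far along a Følner sequence, these products are small in the mean as soon as one of the
vectors `x = ι(a)`, `ι(b)` is a flight vector: the averages of the rank one projections onto the
orbit of `x` converge in Hilbert–Schmidt norm to a compact symmetric operator commuting with `U`,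
and such an operator vanishes on `H_v`, since it would otherwise have a finite-dimensional
invariant eigenspace there, hence a joint eigenvector. The factor `τ_h(c)` is bounded and comes out
of the average over `g`. If instead `ι(c*)` is a flight vector, asymptotic abelianness interchanges
`τ_g(b)` and `τ_h(c)`, and the same argument applies with the two Følner sequences interchanged,
since by the trace property `c` and `c*` have correlations of the same absolute value.

The σ-algebra of `G` need not contain the singletons. The integrals are nevertheless finite sums,
because the integrands are constant on its atoms.
-/

open Finset (sum_le_sum sum_nonneg sum_comm)
open scoped Finset InnerProductSpace symmDiff

section FinsetAverage

variable {α β E E' : Type*}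

/-- The average of `f` over the finite set `F`, with value `0` when `F` is empty. -/
noncomputable def finsetAvg [AddCommMonoid E] [Module ℝ E] (F : Finset α) (f : α → E) : E :=
  (#F : ℝ)⁻¹ • ∑ x ∈ F, f x

section Module

variable [AddCommGroup E] [Module ℝ E] [AddCommGroup E'] [Module ℝ E']

lemma finsetAvg_const {F : Finset α} (hF : F.Nonempty) (c : E) : finsetAvg F (fun _ ↦ c) = c := by
  have hcard : (#F : ℝ) ≠ 0 := Nat.cast_ne_zero.2 hF.card_pos.ne'
  rw [finsetAvg, Finset.sum_const, ← Nat.cast_smul_eq_nsmul ℝ, inv_smul_smul₀ hcard]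

lemma finsetAvg_sub (F : Finset α) (f g : α → E) :
    finsetAvg F (fun x ↦ f x - g x) = finsetAvg F f - finsetAvg F g := by
  simp only [finsetAvg, Finset.sum_sub_distrib, smul_sub]

lemma finsetAvg_comm (F : Finset α) (K : Finset β) (f : α → β → E) :
    finsetAvg F (fun x ↦ finsetAvg K (f x)) = finsetAvg K fun y ↦ finsetAvg F fun x ↦ f x y := by
  simp only [finsetAvg, ← Finset.smul_sum]
  rw [smul_comm, sum_comm]

lemma map_finsetAvg {𝓕 : Type*} [FunLike 𝓕 E E'] [AddMonoidHomClass 𝓕 E E'] (L : 𝓕)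
    (F : Finset α) (f : α → E) : L (finsetAvg F f) = finsetAvg F fun x ↦ L (f x) := by
  rw [finsetAvg, map_inv_natCast_smul L ℝ ℝ, map_sum, finsetAvg]

lemma finsetAvg_mem_convexHull {F : Finset α} (hF : F.Nonempty) (f : α → E) :
    finsetAvg F f ∈ convexHull ℝ (Set.range f) := by
  have hcard : (#F : ℝ) ≠ 0 := Nat.cast_ne_zero.2 hF.card_pos.ne'
  rw [finsetAvg, Finset.smul_sum]
  exact (convex_convexHull ℝ _).sum_mem (fun _ _ ↦ by positivity) (by simp [hcard])
    fun x _ ↦ subset_convexHull ℝ _ ⟨x, rfl⟩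

end Module

section Real

variable {F : Finset α} {f g : α → ℝ}

lemma finsetAvg_mono (h : ∀ x ∈ F, f x ≤ g x) : finsetAvg F f ≤ finsetAvg F g :=
  mul_le_mul_of_nonneg_left (sum_le_sum h) (by positivity)

lemma finsetAvg_nonneg (h : ∀ x ∈ F, 0 ≤ f x) : 0 ≤ finsetAvg F f :=
  mul_nonneg (by positivity) (sum_nonneg h)

lemma finsetAvg_le_of_forall_le {c : ℝ} (hc : 0 ≤ c) (h : ∀ x ∈ F, f x ≤ c) :
    finsetAvg F f ≤ c := by
  rcases F.eq_empty_or_nonempty with rfl | hF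
  · simpa [finsetAvg] using hc
  · exact (finsetAvg_mono h).trans_eq (finsetAvg_const hF c)

lemma finsetAvg_add_const_le {c : ℝ} (hc : 0 ≤ c) (F : Finset α) (f : α → ℝ) :
    finsetAvg F (fun x ↦ f x + c) ≤ finsetAvg F f + c := by
  have hsplit : finsetAvg F (fun x ↦ f x + c) = finsetAvg F f + finsetAvg F fun _ ↦ c := by
    simp only [finsetAvg, Finset.sum_add_distrib, smul_add]
  rw [hsplit]
  gcongr
  exact finsetAvg_le_of_forall_le hc fun _ _ ↦ le_rfl

lemma finsetAvg_const_mul (c : ℝ) (F : Finset α) (f : α → ℝ) :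
    finsetAvg F (fun x ↦ c * f x) = c * finsetAvg F f :=
  (map_finsetAvg (AddMonoidHom.mulLeft c) F f).symm

lemma finsetAvg_sq_le (F : Finset α) (f : α → ℝ) :
    finsetAvg F f ^ 2 ≤ finsetAvg F fun x ↦ f x ^ 2 := by
  rcases F.eq_empty_or_nonempty with rfl | hF
  · simp [finsetAvg]
  have hcard : 0 < (#F : ℝ) := Nat.cast_pos.2 hF.card_pos
  simp only [finsetAvg, smul_eq_mul]
  rw [mul_pow, inv_pow, sq (#F : ℝ), mul_inv, mul_assoc]
  gcongr
  rw [inv_mul_le_iff₀ hcard]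
  exact sq_sum_le_card_mul_sum_sq

lemma finsetAvg_finsetAvg_mul_le {K : Finset β} {p q : α → β → ℝ} {C : ℝ} (hC : 0 ≤ C)
    (hp : ∀ x y, 0 ≤ p x y) (hq : ∀ x y, q x y ≤ C) :
    finsetAvg F (fun x ↦ finsetAvg K fun y ↦ p x y * q x y) ≤
      C * √(finsetAvg F fun x ↦ finsetAvg K fun y ↦ p x y ^ 2) :=
  calc finsetAvg F (fun x ↦ finsetAvg K fun y ↦ p x y * q x y)
      ≤ finsetAvg F fun x ↦ finsetAvg K fun y ↦ C * p x y :=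
        finsetAvg_mono fun x _ ↦ finsetAvg_mono fun y _ ↦ by
          rw [mul_comm]
          exact mul_le_mul_of_nonneg_right (hq x y) (hp x y)
    _ = C * finsetAvg F fun x ↦ finsetAvg K (p x) := by simp only [finsetAvg_const_mul]
    _ ≤ C * √(finsetAvg F fun x ↦ finsetAvg K fun y ↦ p x y ^ 2) := by
        refine mul_le_mul_of_nonneg_left (Real.le_sqrt_of_sq_le ?_) hC
        exact (finsetAvg_sq_le F _).trans (finsetAvg_mono fun x _ ↦ finsetAvg_sq_le K _)

end Real

lemma norm_finsetAvg_le [SeminormedAddCommGroup E] [NormedSpace ℝ E] (F : Finset α) (f : α → E) :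
    ‖finsetAvg F f‖ ≤ finsetAvg F fun x ↦ ‖f x‖ := by
  rw [finsetAvg, norm_smul, Real.norm_of_nonneg (by positivity), finsetAvg, smul_eq_mul]
  gcongr
  exact norm_sum_le _ _

section Inner

variable [SeminormedAddCommGroup E] [InnerProductSpace ℂ E] [Module ℝ E]

lemma inner_finsetAvg_right (F : Finset α) (z : E) (f : α → E) :
    ⟪z, finsetAvg F f⟫_ℂ = finsetAvg F fun x ↦ ⟪z, f x⟫_ℂ :=
  map_finsetAvg (innerSL ℂ z) F f

lemma inner_finsetAvg_left (F : Finset α) (z : E) (f : α → E) :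
    ⟪finsetAvg F f, z⟫_ℂ = finsetAvg F fun x ↦ ⟪f x, z⟫_ℂ := by
  rw [← inner_conj_symm, inner_finsetAvg_right, map_finsetAvg]
  simp only [inner_conj_symm]

lemma norm_finsetAvg_sq (F : Finset α) (f : α → E) :
    ((‖finsetAvg F f‖ ^ 2 : ℝ) : ℂ) = finsetAvg F fun x ↦ finsetAvg F fun y ↦ ⟪f x, f y⟫_ℂ := by
  simp only [← inner_finsetAvg_right, ← inner_finsetAvg_left]
  exact_mod_cast (inner_self_eq_norm_sq_to_K (𝕜 := ℂ) _).symm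

end Inner

end FinsetAverage

section Foelner

variable {G ι E : Type*} [Group G]

open Classical in
/-- The relative size `#(gF ∆ F) / #F` of the boundary of a finite set `F` in the direction `g`. -/
noncomputable def shiftDefect (F : Finset G) (g : G) : ℝ :=
  #((g • F) ∆ F) / #F

/-- The Følner condition for a net of finite sets. Unlike Mathlib's `IsFoelner` it does not refer to
a σ-algebra on `G`, which need not contain the singletons. -/
structure IsFinsetFoelner (l : Filter ι) (F : ι → Finset G) : Prop where
  eventually_nonempty : ∀ᶠ i in l, (F i).Nonempty
  tendsto_shiftDefect (g : G) : Tendsto (fun i ↦ shiftDefect (F i) g) l (𝓝 0)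

lemma IsFinsetFoelner.map {l : Filter ι} {F : ι → Finset G} (hF : IsFinsetFoelner l F) :
    IsFinsetFoelner (l.map F) id :=
  ⟨hF.eventually_nonempty, fun g ↦ tendsto_map'_iff.2 (hF.tendsto_shiftDefect g)⟩

lemma norm_finsetAvg_mul_left_sub_le [SeminormedAddCommGroup E] [NormedSpace ℝ E] (F : Finset G)
    (g : G) {f : G → E} {M : ℝ} (hM : ∀ x, ‖f x‖ ≤ M) :
    ‖finsetAvg F (fun h ↦ f (g * h)) - finsetAvg F f‖ ≤ M * shiftDefect F g := by
  classical
  have hshift : ∑ h ∈ F, f (g * h) = ∑ h ∈ g • F, f h :=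
    (Finset.sum_image (mul_right_injective g).injOn).symm
  have hbound (s : Finset G) : ‖∑ h ∈ s, f h‖ ≤ #s * M :=
    (norm_sum_le_of_le s fun x _ ↦ hM x).trans_eq (by simp)
  have hsum : ‖∑ h ∈ g • F, f h - ∑ h ∈ F, f h‖ ≤ M * #((g • F) ∆ F) :=
    calc ‖∑ h ∈ g • F, f h - ∑ h ∈ F, f h‖
        = ‖∑ h ∈ (g • F) \ F, f h - ∑ h ∈ F \ (g • F), f h‖ := by
          rw [Finset.sum_sdiff_sub_sum_sdiff]
      _ ≤ #((g • F) \ F) * M + #(F \ (g • F)) * M :=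
          (norm_sub_le _ _).trans (add_le_add (hbound _) (hbound _))
      _ = M * #((g • F) ∆ F) := by
          rw [symmDiff_def, Finset.sup_eq_union,
            Finset.card_union_of_disjoint disjoint_sdiff_sdiff]
          push_cast
          ring
  rw [finsetAvg, finsetAvg, ← smul_sub, norm_smul, Real.norm_of_nonneg (by positivity), hshift,
    shiftDefect, ← mul_div_assoc, div_eq_inv_mul]
  convert mul_le_mul_of_nonneg_left hsum (show (0 : ℝ) ≤ (#F : ℝ)⁻¹ by positivity)

end Foelner

section MeanErgodic

variable {G ι E : Type*} [Group G]

/-- A family of vectors whose Gram kernel is invariant under right translations, such as the orbit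
of a vector under a unitary representation of a commutative group. -/
def IsStationaryFamily (𝕜 : Type*) [RCLike 𝕜] [SeminormedAddCommGroup E] [InnerProductSpace 𝕜 E]
    (v : G → E) : Prop :=
  ∀ g k l, ⟪v (k * g), v (l * g)⟫_𝕜 = ⟪v k, v l⟫_𝕜

namespace IsStationaryFamily

variable [SeminormedAddCommGroup E] [InnerProductSpace ℝ E] {v : G → E}

lemma norm_sum_smul_mul_right (hv : IsStationaryFamily ℝ v) {κ : Type*} (s : Finset κ) (w : κ → ℝ)
    (k : κ → G) (g : G) : ‖∑ i ∈ s, w i • v (k i * g)‖ = ‖∑ i ∈ s, w i • v (k i)‖ := by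
  simp only [norm_eq_sqrt_real_inner, sum_inner, inner_sum, inner_smul_left, inner_smul_right,
    hv g _ _]

lemma norm_eq (hv : IsStationaryFamily ℝ v) (g : G) : ‖v g‖ = ‖v 1‖ := by
  simpa using hv.norm_sum_smul_mul_right {()} 1 1 g

/-- Averages of a stationary family are asymptotically no longer than any convex combination:
replace `v` by the translates of that combination, all of the same length, at the cost of the shift
defects. -/
lemma norm_finsetAvg_le (hv : IsStationaryFamily ℝ v) {κ : Type*} {s : Finset κ} {w : κ → ℝ}
    (hw : ∀ i ∈ s, 0 ≤ w i) (hw1 : ∑ i ∈ s, w i = 1) (k : κ → G) (F : Finset G) :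
    ‖finsetAvg F v‖ ≤
      ‖∑ i ∈ s, w i • v (k i)‖ + ∑ i ∈ s, w i * (‖v 1‖ * shiftDefect F (k i)) := by
  set u := finsetAvg F fun g ↦ ∑ i ∈ s, w i • v (k i * g)
  have hu : ‖u‖ ≤ ‖∑ i ∈ s, w i • v (k i)‖ :=
    (_root_.norm_finsetAvg_le F _).trans <| finsetAvg_le_of_forall_le (norm_nonneg _) fun g _ ↦
      (hv.norm_sum_smul_mul_right s w k g).le
  have hu_eq : u - finsetAvg F v =
      ∑ i ∈ s, w i • (finsetAvg F (fun g ↦ v (k i * g)) - finsetAvg F v) := by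
    simp only [u, smul_sub, Finset.sum_sub_distrib, ← Finset.sum_smul, hw1, one_smul]
    simp only [finsetAvg, Finset.smul_sum, smul_comm (w _)]
    rw [sum_comm]
  have hsub : ‖u - finsetAvg F v‖ ≤ ∑ i ∈ s, w i * (‖v 1‖ * shiftDefect F (k i)) := by
    rw [hu_eq]
    refine norm_sum_le_of_le s fun i hi ↦ ?_
    rw [norm_smul, Real.norm_of_nonneg (hw i hi)]
    exact mul_le_mul_of_nonneg_left
      (norm_finsetAvg_mul_left_sub_le F (k i) fun g ↦ (hv.norm_eq g).le) (hw i hi)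
  linarith [norm_le_norm_add_norm_sub' (finsetAvg F v) u, norm_sub_rev u (finsetAvg F v)]

lemma eventually_norm_finsetAvg_le (hv : IsStationaryFamily ℝ v) {l : Filter ι} {F : ι → Finset G}
    (hF : IsFinsetFoelner l F) {y : E} (hy : y ∈ convexHull ℝ (Set.range v)) {ε : ℝ} (hε : 0 < ε) :
    ∀ᶠ i in l, ‖finsetAvg (F i) v‖ ≤ ‖y‖ + ε := by
  obtain ⟨κ, _, w, z, hw, hw1, hz, rfl⟩ := mem_convexHull_iff_exists_fintype.1 hy
  choose k hk using hz
  have hdefect : Tendsto (fun i ↦ ∑ m, w m * (‖v 1‖ * shiftDefect (F i) (k m))) l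
      (𝓝 (∑ m, w m * (‖v 1‖ * 0))) :=
    tendsto_finsetSum _ fun m _ ↦ ((hF.tendsto_shiftDefect (k m)).const_mul _).const_mul _
  simp only [mul_zero, Finset.sum_const_zero] at hdefect
  filter_upwards [hdefect.eventually_le_const hε] with i hi
  simp only [← hk]
  exact (hv.norm_finsetAvg_le (fun m _ ↦ hw m) hw1 k (F i)).trans (by gcongr)

end IsStationaryFamily

end MeanErgodic

section MinimalNorm

variable {E : Type*} [NormedAddCommGroup E] [InnerProductSpace ℝ E]

lemma exists_isMinOn_norm [CompleteSpace E] {C : Set E} (hne : C.Nonempty) (hC : IsClosed C)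
    (hconv : Convex ℝ C) : ∃ p ∈ C, IsMinOn (‖·‖) C p := by
  obtain ⟨p, hp, hmin⟩ := exists_norm_eq_iInf_of_complete_convex hne hC.isComplete hconv 0
  refine ⟨p, hp, fun y hy ↦ ?_⟩
  have hbdd : BddBelow (Set.range fun w : C ↦ ‖0 - (w : E)‖) :=
    ⟨0, Set.forall_mem_range.2 fun _ ↦ norm_nonneg _⟩
  change ‖p‖ ≤ ‖y‖
  simpa only [zero_sub, norm_neg] using hmin.trans_le (ciInf_le hbdd ⟨y, hy⟩)

lemma norm_sub_sq_le_of_isMinOn_norm {C : Set E} (hconv : Convex ℝ C) {p : E} (hp : p ∈ C)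
    (hmin : IsMinOn (‖·‖) C p) {y : E} (hy : y ∈ C) : ‖y - p‖ ^ 2 ≤ ‖y‖ ^ 2 - ‖p‖ ^ 2 := by
  have : Nonempty C := ⟨⟨p, hp⟩⟩
  have hbdd : BddBelow (Set.range fun w : C ↦ ‖0 - (w : E)‖) :=
    ⟨0, Set.forall_mem_range.2 fun _ ↦ norm_nonneg _⟩
  have hinf : ‖0 - p‖ = ⨅ w : C, ‖0 - (w : E)‖ :=
    le_antisymm
      (le_ciInf fun w ↦ by simpa only [zero_sub, norm_neg] using isMinOn_iff.1 hmin w w.2)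
      (ciInf_le hbdd ⟨p, hp⟩)
  have hobtuse : ⟪0 - p, y - p⟫_ℝ ≤ 0 :=
    (norm_eq_iInf_iff_real_inner_le_zero hconv hp).1 hinf y hy
  have hexpand : ‖y‖ ^ 2 = ‖p‖ ^ 2 + 2 * ⟪p, y - p⟫_ℝ + ‖y - p‖ ^ 2 := by
    rw [← norm_add_sq_real, add_sub_cancel]
  rw [zero_sub, inner_neg_left] at hobtuse
  linarith

end MinimalNorm

section MeanErgodicTheorem

variable {G ι E : Type*} [Group G] [NormedAddCommGroup E] {v : G → E}

lemma IsStationaryFamily.tendsto_finsetAvg [InnerProductSpace ℝ E] (hv : IsStationaryFamily ℝ v)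
    {p : E} (hp : p ∈ closure (convexHull ℝ (Set.range v)))
    (hmin : IsMinOn (‖·‖) (closure (convexHull ℝ (Set.range v))) p) {l : Filter ι}
    {F : ι → Finset G} (hF : IsFinsetFoelner l F) :
    Tendsto (fun i ↦ finsetAvg (F i) v) l (𝓝 p) := by
  have hmem : ∀ᶠ i in l, finsetAvg (F i) v ∈ closure (convexHull ℝ (Set.range v)) :=
    hF.eventually_nonempty.mono fun i hi ↦ subset_closure (finsetAvg_mem_convexHull hi v)
  have hnorm : Tendsto (fun i ↦ ‖finsetAvg (F i) v‖) l (𝓝 ‖p‖) := by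
    refine tendsto_order.2 ⟨fun r hr ↦ hmem.mono fun i hi ↦ hr.trans_le (hmin hi), fun r hr ↦ ?_⟩
    obtain ⟨y, hyr, hy⟩ := mem_closure_iff_nhds.1 hp _ (continuous_norm.continuousAt.eventually_lt
      continuousAt_const hr)
    filter_upwards [hv.eventually_norm_finsetAvg_le hF hy (half_pos (sub_pos.2 hyr))] with i hi
    linarith [show ‖y‖ < r from hyr]
  have hsq : Tendsto (fun i ↦ ‖finsetAvg (F i) v‖ ^ 2 - ‖p‖ ^ 2) l (𝓝 0) :=
    tendsto_sub_nhds_zero_iff.2 (hnorm.pow 2)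
  have hdist : Tendsto (fun i ↦ ‖finsetAvg (F i) v - p‖ ^ 2) l (𝓝 0) :=
    squeeze_zero' (Eventually.of_forall fun _ ↦ by positivity)
      (hmem.mono fun i hi ↦
        norm_sub_sq_le_of_isMinOn_norm (convex_convexHull ℝ _).closure hp hmin hi) hsq
  rw [tendsto_iff_norm_sub_tendsto_zero]
  simpa using hdist.sqrt

/-- The mean ergodic theorem: the limit is the shortest vector in the closed convex hull. -/
theorem IsStationaryFamily.exists_forall_tendsto_finsetAvg [InnerProductSpace ℂ E] [CompleteSpace E]
    (hv : IsStationaryFamily ℂ v) : ∃ p, ∀ l : Filter (Finset G), IsFinsetFoelner l id →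
      Tendsto (finsetAvg · v) l (𝓝 p) := by
  let : InnerProductSpace ℝ E := InnerProductSpace.rclikeToReal ℂ E
  have hv' : IsStationaryFamily ℝ v := fun g k l ↦ congrArg Complex.re (hv g k l)
  obtain ⟨p, hp, hmin⟩ := exists_isMinOn_norm (Set.range_nonempty v).convexHull.closure
    isClosed_closure (convex_convexHull ℝ _).closure
  exact ⟨p, fun l hl ↦ hv'.tendsto_finsetAvg hp hmin hl⟩

end MeanErgodicTheorem

section HilbertSchmidt

variable {H w : Type*} [NormedAddCommGroup H] [InnerProductSpace ℂ H]

lemma memℓp_inner_smul (b : HilbertBasis w ℂ H) (z y : H) :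
    Memℓp (fun i ↦ ⟪y, b i⟫_ℂ • z) 2 := by
  rw [memℓp_gen_iff (by norm_num)]
  refine ((b.summable_inner_mul_inner y y).norm.mul_right (‖z‖ ^ 2)).congr fun i ↦ ?_
  rw [norm_smul, norm_mul, norm_inner_symm (b i) y]
  norm_num
  ring

/-- The rank one operator `x ↦ ⟪y, x⟫ • z` as a Hilbert–Schmidt operator: an operator on `H` is
represented in `ℓ²(w, H)` by its values on the Hilbert basis `b`. -/
noncomputable def hsRankOne (b : HilbertBasis w ℂ H) (z y : H) : lp (fun _ : w ↦ H) 2 :=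
  ⟨_, memℓp_inner_smul b z y⟩

lemma inner_hsRankOne (b : HilbertBasis w ℂ H) (z y z' y' : H) :
    ⟪hsRankOne b z y, hsRankOne b z' y'⟫_ℂ = ⟪z, z'⟫_ℂ * ⟪y', y⟫_ℂ := by
  simp only [lp.inner_eq_tsum, hsRankOne, inner_smul_left, inner_smul_right, inner_conj_symm]
  rw [← b.tsum_inner_mul_inner y' y, ← tsum_mul_left]
  exact tsum_congr fun i ↦ by ring

lemma norm_hsRankOne (b : HilbertBasis w ℂ H) (z y : H) : ‖hsRankOne b z y‖ = ‖z‖ * ‖y‖ := by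
  rw [← sq_eq_sq₀ (norm_nonneg _) (by positivity), mul_pow]
  have hinner := inner_hsRankOne b z y z y
  simp only [inner_self_eq_norm_sq_to_K] at hinner
  exact_mod_cast hinner

lemma opNorm_le_of_inner_hsRankOne (b : HilbertBasis w ℂ H) {T : H →L[ℂ] H}
    {f : lp (fun _ : w ↦ H) 2} (h : ∀ z y, ⟪z, T y⟫_ℂ = ⟪hsRankOne b z y, f⟫_ℂ) : ‖T‖ ≤ ‖f‖ :=
  ContinuousLinearMap.opNorm_le_of_re_inner_le (norm_nonneg f) fun y z hy hz ↦ by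
    calc RCLike.re ⟪T y, z⟫_ℂ = RCLike.re ⟪hsRankOne b z y, f⟫_ℂ := by rw [inner_re_symm, h]
      _ ≤ ‖hsRankOne b z y‖ * ‖f‖ := re_inner_le_norm _ _
      _ = ‖f‖ := by rw [norm_hsRankOne, hy, hz, one_mul, one_mul]

end HilbertSchmidt

section JointEigenvector

variable {K κ : Type*} [Field K] [IsAlgClosed K]

lemma exists_ne_zero_forall_apply_eq_smul_of_commute {V : Type*} [AddCommGroup V] [Module K V]
    [FiniteDimensional K V] [Nontrivial V] (f : κ → Module.End K V)
    (hf : ∀ i k, Commute (f i) (f k)) : ∃ v ≠ 0, ∀ i, ∃ μ : K, f i v = μ • v := by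
  induction hn : Module.finrank K V using Nat.strong_induction_on generalizing V with
  | _ n ih =>
    by_cases hscalar : ∀ i, ∃ μ : K, Module.End.eigenspace (f i) μ = ⊤
    · choose μ hμ using hscalar
      obtain ⟨v, hv⟩ := exists_ne (0 : V)
      exact ⟨v, hv, fun i ↦ ⟨μ i, Module.End.mem_eigenspace_iff.1 (hμ i ▸ Submodule.mem_top)⟩⟩
    push Not at hscalar
    obtain ⟨k, hk⟩ := hscalar
    obtain ⟨μ, hμ⟩ := Module.End.exists_eigenvalue (f k)
    set W := Module.End.eigenspace (f k) μ
    have hinv (i : κ) : Set.MapsTo (f i) W W :=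
      Module.End.mapsTo_genEigenspace_of_comm (hf k i) μ 1
    have : Nontrivial W := Submodule.nontrivial_iff_ne_bot.2 hμ
    obtain ⟨v, hv, hv'⟩ := ih (Module.finrank K W) (hn ▸ Submodule.finrank_lt (hk μ))
      (fun i ↦ (f i).restrict (hinv i))
      (fun i k ↦ LinearMap.ext fun x ↦ Subtype.ext (LinearMap.congr_fun (hf i k) x)) rfl
    exact ⟨v, Subtype.coe_ne_coe.2 hv, fun i ↦ (hv' i).imp fun ν hν ↦ congrArg Subtype.val hν⟩

end JointEigenvector

/-- A unitary representation of `G` on `H`, given by its operators. -/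
structure IsUnitaryRep {G H : Type*} [Group G] [NormedAddCommGroup H] [InnerProductSpace ℂ H]
    (U : G → H →L[ℂ] H) : Prop where
  map_one : U 1 = 1
  map_mul (g h : G) : U (g * h) = U g * U h
  inner_map_map (g : G) (x y : H) : ⟪U g x, U g y⟫_ℂ = ⟪x, y⟫_ℂ

namespace IsUnitaryRep

section Group

variable {G H : Type*} [Group G] [NormedAddCommGroup H] [InnerProductSpace ℂ H]
  {U : G → H →L[ℂ] H}

lemma norm_map (hU : IsUnitaryRep U) (g : G) (x : H) : ‖U g x‖ = ‖x‖ := by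
  rw [norm_eq_sqrt_re_inner (𝕜 := ℂ), hU.inner_map_map, ← norm_eq_sqrt_re_inner]

lemma map_mul_apply (hU : IsUnitaryRep U) (g h : G) (x : H) : U (g * h) x = U g (U h x) :=
  DFunLike.congr_fun (hU.map_mul g h) x

lemma inner_map_right (hU : IsUnitaryRep U) (g : G) (x y : H) : ⟪x, U g y⟫_ℂ = ⟪U g⁻¹ x, y⟫_ℂ := by
  rw [← hU.inner_map_map g (U g⁻¹ x), ← hU.map_mul_apply, mul_inv_cancel, hU.map_one,
    one_apply_eq_self]

/-- The eigenvalues of a unitary representation are automatically unimodular. -/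
lemma mem_flightVectors_iff (hU : IsUnitaryRep U) {z : H} :
    z ∈ flightVectors U ↔ ∀ e, (∀ g, ∃ μ : ℂ, U g e = μ • e) → ⟪e, z⟫_ℂ = 0 := by
  rw [flightVectors, Submodule.orthogonal_closure, Submodule.mem_orthogonal]
  refine ⟨fun hz e he ↦ ?_, fun hz u hu ↦ ?_⟩
  · rcases eq_or_ne e 0 with rfl | he0
    · exact inner_zero_left z
    choose μ hμ using he
    have hμ_norm (g : G) : ‖μ g‖ = 1 := by
      have hnorm := hU.norm_map g e
      rw [hμ, norm_smul] at hnorm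
      exact (mul_eq_right₀ (norm_ne_zero_iff.2 he0)).1 hnorm
    exact hz e (Submodule.subset_span ⟨he0, μ, fun g ↦ ⟨hμ_norm g, hμ g⟩⟩)
  · induction hu using Submodule.span_induction with
    | mem e he =>
      obtain ⟨-, μ, hμ⟩ := he
      exact hz e fun g ↦ ⟨μ g, (hμ g).2⟩
    | zero => exact inner_zero_left z
    | add u v _ _ hu hv => rw [inner_add_left, hu, hv, add_zero]
    | smul c u _ hu => rw [inner_smul_left, hu, mul_zero]

lemma map_mem_flightVectors (hU : IsUnitaryRep U) {T S : H →L[ℂ] H}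
    (hTS : ∀ x y, ⟪x, T y⟫_ℂ = ⟪S x, y⟫_ℂ) (hS : ∀ g, Commute S (U g)) {z : H}
    (hz : z ∈ flightVectors U) : T z ∈ flightVectors U := by
  rw [hU.mem_flightVectors_iff] at hz ⊢
  intro e he
  rw [hTS]
  refine hz (S e) fun g ↦ (he g).imp fun μ hμ ↦ ?_
  have hcomm : S (U g e) = U g (S e) := DFunLike.congr_fun (hS g).eq e
  rw [← hcomm, hμ, map_smul]

end Group

variable {G H : Type*} [CommGroup G] [NormedAddCommGroup H] [InnerProductSpace ℂ H]
  {U : G → H →L[ℂ] H}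

lemma commute (hU : IsUnitaryRep U) (g h : G) : Commute (U g) (U h) := by
  rw [commute_iff_eq, ← hU.map_mul, mul_comm, hU.map_mul]

lemma isStationaryFamily_orbit (hU : IsUnitaryRep U) (x : H) :
    IsStationaryFamily ℂ fun g ↦ U g x := fun g k l ↦ by
  simp only [mul_comm _ g, hU.map_mul_apply, hU.inner_map_map]

lemma eq_bot_of_le_flightVectors (hU : IsUnitaryRep U) {W : Submodule ℂ H} [FiniteDimensional ℂ W]
    (hinv : ∀ g, ∀ x ∈ W, U g x ∈ W) (hW : W ≤ flightVectors U) : W = ⊥ := by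
  by_contra hne
  have : Nontrivial W := Submodule.nontrivial_iff_ne_bot.2 hne
  obtain ⟨v, hv, hv'⟩ := exists_ne_zero_forall_apply_eq_smul_of_commute
    (fun g ↦ (U g : H →ₗ[ℂ] H).restrict (hinv g)) fun g h ↦ LinearMap.ext fun x ↦
      Subtype.ext (DFunLike.congr_fun (hU.commute g h).eq (x : H))
  have heigen (g : G) : ∃ μ : ℂ, U g v = μ • (v : H) :=
    (hv' g).imp fun μ hμ ↦ congrArg Subtype.val hμ
  exact Subtype.coe_ne_coe.2 hv
    (inner_self_eq_zero.1 (hU.mem_flightVectors_iff.1 (hW v.2) v heigen))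

/-- On the flight vectors, an eigenspace of `T` for a nonzero eigenvalue would be finite-dimensional
and invariant under `U`, hence would contain a joint eigenvector. -/
lemma apply_eq_zero_of_mem_flightVectors [CompleteSpace H] (hU : IsUnitaryRep U) {T : H →L[ℂ] H}
    (hT : IsCompactOperator T) (hT_symm : T.IsSymmetric) (hTU : ∀ g, Commute T (U g)) {x : H}
    (hx : x ∈ flightVectors U) : T x = 0 := by
  have hT_maps (z) (hz : z ∈ flightVectors U) : T z ∈ flightVectors U :=
    hU.map_mem_flightVectors (fun x y ↦ (hT_symm x y).symm) hTU hz
  have hU_maps (g z) (hz : z ∈ flightVectors U) : U g z ∈ flightVectors U :=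
    hU.map_mem_flightVectors (hU.inner_map_right g) (hU.commute g⁻¹) hz
  have : CompleteSpace (flightVectors U) := (Submodule.isClosed_orthogonal _).completeSpace_coe
  let S : flightVectors U →L[ℂ] flightVectors U := T.restrict hT_maps
  have hS : S = 0 := by
    refine (ContinuousLinearMap.eq_zero_of_forall_hasEigenvalue_eq_zero (T := S)
      (hT.restrict' (f := (T : H →ₗ[ℂ] H)) hT_maps) fun y z ↦ hT_symm y z).1 fun μ hμ ↦ ?_
    by_contra hμ0
    let W := flightVectors U ⊓ Module.End.eigenspace T.toLinearMap μ
    have : FiniteDimensional ℂ (Module.End.eigenspace T.toLinearMap μ) :=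
      ContinuousLinearMap.finite_dimensional_eigenspace hT μ hμ0
    have : FiniteDimensional ℂ W := Submodule.finiteDimensional_of_le inf_le_right
    have hW_inv (g z) (hz : z ∈ W) : U g z ∈ W :=
      ⟨hU_maps g z hz.1,
        Module.End.mapsTo_genEigenspace_of_comm (f := T.toLinearMap) (g := (U g).toLinearMap)
          (LinearMap.ext fun y ↦ DFunLike.congr_fun (hTU g).eq y) μ 1 hz.2⟩
    obtain ⟨e, he⟩ := hμ.exists_hasEigenvector
    have heW : (e : H) ∈ W :=
      ⟨e.2, Module.End.mem_eigenspace_iff.2 (congrArg Subtype.val he.apply_eq_smul)⟩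
    rw [hU.eq_bot_of_le_flightVectors hW_inv inf_le_left, Submodule.mem_bot] at heW
    exact he.2 (Subtype.ext heW)
  exact congrArg Subtype.val (DFunLike.congr_fun hS ⟨x, hx⟩)

end IsUnitaryRep

lemma cauchy_map_of_dist_le {ι X Y : Type*} [PseudoMetricSpace X] [PseudoMetricSpace Y]
    {l : Filter ι} [l.NeBot] {f : ι → X} {g : ι → Y}
    (h : ∀ i k, dist (f i) (f k) ≤ dist (g i) (g k))
    {y : Y} (hg : Tendsto g l (𝓝 y)) : Cauchy (l.map f) := by
  have hg_dist := tendsto_uniformity_iff_dist_tendsto_zero.1 (cauchy_map_iff.1 hg.cauchy_map).2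
  exact cauchy_map_iff.2 ⟨‹_›, tendsto_uniformity_iff_dist_tendsto_zero.2
    (squeeze_zero (fun _ ↦ dist_nonneg) (fun p ↦ h p.1 p.2) hg_dist)⟩

lemma isCompactOperator_rankOne {H : Type*} [NormedAddCommGroup H] [InnerProductSpace ℂ H]
    (x y : H) : IsCompactOperator (InnerProductSpace.rankOne ℂ x y) :=
  ((isCompactOperator_id_iff_finiteDimensional (𝕜 := ℂ) (E := ℂ)).2 inferInstance).clm_comp
    (ContinuousLinearMap.toSpanSingleton ℂ x) |>.comp_clm (innerSL ℂ y)

lemma isSymmetric_of_tendsto {ι H : Type*} [NormedAddCommGroup H] [InnerProductSpace ℂ H]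
    {l : Filter ι} [l.NeBot] {S : ι → H →L[ℂ] H} {T : H →L[ℂ] H} (hS : ∀ i, (S i).IsSymmetric)
    (hT : Tendsto S l (𝓝 T)) : T.IsSymmetric := fun y z ↦ by
  have happly (x : H) : Tendsto (fun i ↦ S i x) l (𝓝 (T x)) :=
    ((ContinuousLinearMap.apply ℂ H x).continuous.tendsto T).comp hT
  exact tendsto_nhds_unique ((happly y).inner tendsto_const_nhds)
    ((tendsto_const_nhds.inner (happly z)).congr fun i ↦ (hS i y z).symm)

/-- The average over `k ∈ F` of the rank one operators `y ↦ ⟪U k x, y⟫ • U k x`. -/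
noncomputable def orbitOperator {G H : Type*} [NormedAddCommGroup H] [InnerProductSpace ℂ H]
    (U : G → H →L[ℂ] H) (x : H) (F : Finset G) : H →L[ℂ] H :=
  finsetAvg F fun k ↦ InnerProductSpace.rankOne ℂ (U k x) (U k x)

section OrbitOperator

variable {G H : Type*} [NormedAddCommGroup H] [InnerProductSpace ℂ H] (U : G → H →L[ℂ] H) (x : H)
  (F : Finset G)

lemma inner_orbitOperator (z y : H) :
    ⟪z, orbitOperator U x F y⟫_ℂ = finsetAvg F fun k ↦ ⟪U k x, y⟫_ℂ * ⟪z, U k x⟫_ℂ := by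
  have happly := map_finsetAvg ((innerSL ℂ z).comp (ContinuousLinearMap.apply ℂ H y)) F
    fun k ↦ InnerProductSpace.rankOne ℂ (U k x) (U k x)
  simpa [orbitOperator, inner_smul_right] using happly

lemma inner_orbitOperator_self (y : H) :
    ⟪y, orbitOperator U x F y⟫_ℂ = finsetAvg F fun k ↦ ‖⟪y, U k x⟫_ℂ‖ ^ 2 := by
  rw [inner_orbitOperator]
  refine (congrArg (finsetAvg F) (funext fun k ↦ ?_)).trans
    (map_finsetAvg Complex.ofRealCLM F _).symm
  rw [← inner_conj_symm (U k x) y, Complex.conj_mul', Complex.ofRealCLM_apply, Complex.ofReal_pow]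

lemma inner_orbitOperator_eq_inner_hsRankOne {w : Type*} (b : HilbertBasis w ℂ H) (z y : H) :
    ⟪z, orbitOperator U x F y⟫_ℂ =
      ⟪hsRankOne b z y, finsetAvg F fun k ↦ hsRankOne b (U k x) (U k x)⟫_ℂ := by
  rw [inner_orbitOperator, inner_finsetAvg_right]
  simp only [inner_hsRankOne, mul_comm]

lemma isCompactOperator_orbitOperator : IsCompactOperator (orbitOperator U x F) :=
  (compactOperator (RingHom.id ℂ) H H).smul_of_tower_mem (#F : ℝ)⁻¹ <|
    Submodule.sum_mem _ fun k _ ↦ isCompactOperator_rankOne (U k x) (U k x)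

lemma isSymmetric_orbitOperator : (orbitOperator U x F).IsSymmetric := fun y z ↦ by
  change ⟪orbitOperator U x F y, z⟫_ℂ = ⟪y, orbitOperator U x F z⟫_ℂ
  rw [← inner_conj_symm, inner_orbitOperator, inner_orbitOperator, map_finsetAvg]
  simp only [map_mul, inner_conj_symm, mul_comm]

end OrbitOperator

namespace IsUnitaryRep

variable {G ι H : Type*} [CommGroup G] [NormedAddCommGroup H] [InnerProductSpace ℂ H]
  {U : G → H →L[ℂ] H} {l : Filter ι} {F : ι → Finset G}

lemma mul_orbitOperator_mul_inv (hU : IsUnitaryRep U) (x : H) (F : Finset G) (g : G) :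
    U g * orbitOperator U x F * U g⁻¹ =
      finsetAvg F fun k ↦ InnerProductSpace.rankOne ℂ (U (g * k) x) (U (g * k) x) := by
  have hconj := map_finsetAvg
    ((AddMonoidHom.mulLeft (U g)).comp (AddMonoidHom.mulRight (U g⁻¹))) F
    fun k ↦ InnerProductSpace.rankOne ℂ (U k x) (U k x)
  simp only [AddMonoidHom.comp_apply, AddMonoidHom.coe_mulLeft, AddMonoidHom.coe_mulRight,
    ← mul_assoc] at hconj
  refine hconj.trans (congrArg _ (funext fun k ↦ ContinuousLinearMap.ext fun y ↦ ?_))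
  simp [hU.map_mul_apply, hU.inner_map_right g⁻¹]

/-- The orbit of `x` under conjugation is stationary in the Hilbert–Schmidt norm, which dominates
the operator norm. -/
lemma exists_tendsto_orbitOperator [CompleteSpace H] (hU : IsUnitaryRep U) (x : H) [l.NeBot]
    (hF : IsFinsetFoelner l F) : ∃ T, Tendsto (fun i ↦ orbitOperator U x (F i)) l (𝓝 T) := by
  obtain ⟨w, b, -⟩ := exists_hilbertBasis ℂ H
  have hstat : IsStationaryFamily ℂ fun k ↦ hsRankOne b (U k x) (U k x) := fun g k m ↦ by
    simp only [inner_hsRankOne, hU.isStationaryFamily_orbit x g _ _]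
  obtain ⟨p, hp⟩ := hstat.exists_forall_tendsto_finsetAvg
  refine cauchy_map_iff_exists_tendsto.1 (cauchy_map_of_dist_le (fun i k ↦ ?_) (hp _ hF.map))
  rw [dist_eq_norm, dist_eq_norm]
  refine opNorm_le_of_inner_hsRankOne b fun z y ↦ ?_
  simp only [sub_apply, inner_sub_right, inner_orbitOperator_eq_inner_hsRankOne U x _ b]
  rfl

lemma commute_of_tendsto_orbitOperator [l.NeBot] (hU : IsUnitaryRep U) {x : H}
    (hF : IsFinsetFoelner l F) {T : H →L[ℂ] H}
    (hT : Tendsto (fun i ↦ orbitOperator U x (F i)) l (𝓝 T)) (g : G) : Commute T (U g) := by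
  have hdefect : Tendsto (fun i ↦ ‖x‖ * ‖x‖ * shiftDefect (F i) g) l (𝓝 0) := by
    simpa using (hF.tendsto_shiftDefect g).const_mul (‖x‖ * ‖x‖)
  have hshift : Tendsto (fun i ↦ U g * orbitOperator U x (F i) * U g⁻¹ - orbitOperator U x (F i)) l
      (𝓝 0) := by
    refine squeeze_zero_norm (fun i ↦ ?_) hdefect
    rw [hU.mul_orbitOperator_mul_inv, orbitOperator]
    exact norm_finsetAvg_mul_left_sub_le (F i) g
      (f := fun k ↦ InnerProductSpace.rankOne ℂ (U k x) (U k x))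
      fun k ↦ by rw [InnerProductSpace.norm_rankOne, hU.norm_map]
  have hconj : U g * T * U g⁻¹ = T :=
    sub_eq_zero.1 (tendsto_nhds_unique (((hT.const_mul _).mul_const _).sub hT) hshift)
  rw [commute_iff_eq]
  nth_rw 1 [← hconj]
  rw [mul_assoc, ← hU.map_mul, inv_mul_cancel, hU.map_one, mul_one]

/-- The inner averages are `⟪U k x, T_F (U k x)⟫` with `T_F` the orbit operators. The limit of the
`T_F` is compact, symmetric and commutes with `U`, hence vanishes on flight vectors. -/
theorem tendsto_finsetAvg_norm_inner_sq_of_mem_flightVectors [CompleteSpace H] [l.NeBot]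
    (hU : IsUnitaryRep U) {x : H} (hx : x ∈ flightVectors U) (hF : IsFinsetFoelner l F) :
    Tendsto (fun i ↦ finsetAvg (F i) fun k ↦ finsetAvg (F i) fun k' ↦ ‖⟪U k x, U k' x⟫_ℂ‖ ^ 2) l
      (𝓝 0) := by
  obtain ⟨T, hT⟩ := hU.exists_tendsto_orbitOperator x hF
  have hTU (g : G) : Commute T (U g) := hU.commute_of_tendsto_orbitOperator hF hT g
  have hTx : T x = 0 := hU.apply_eq_zero_of_mem_flightVectors
    (isCompactOperator_of_tendsto hT (.of_forall fun i ↦ isCompactOperator_orbitOperator U x (F i)))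
    (isSymmetric_of_tendsto (fun i ↦ isSymmetric_orbitOperator U x (F i)) hT) hTU hx
  have hTUx (k : G) : T (U k x) = 0 := by
    have hcomm : T (U k x) = U k (T x) := DFunLike.congr_fun (hTU k).eq x
    rw [hcomm, hTx, map_zero]
  have hbound : Tendsto (fun i ↦ ‖orbitOperator U x (F i) - T‖ * ‖x‖ ^ 2) l (𝓝 0) := by
    simpa using (tendsto_iff_norm_sub_tendsto_zero.1 hT).mul_const (‖x‖ ^ 2)
  refine squeeze_zero (fun i ↦ finsetAvg_nonneg fun k _ ↦ finsetAvg_nonneg fun k' _ ↦ by positivity)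
    (fun i ↦ finsetAvg_le_of_forall_le (by positivity) fun k _ ↦ ?_) hbound
  have hself : ‖⟪U k x, (orbitOperator U x (F i) - T) (U k x)⟫_ℂ‖ =
      finsetAvg (F i) fun k' ↦ ‖⟪U k x, U k' x⟫_ℂ‖ ^ 2 := by
    rw [sub_apply, hTUx, sub_zero, inner_orbitOperator_self, Complex.norm_real,
      Real.norm_of_nonneg (finsetAvg_nonneg fun k' _ ↦ by positivity)]
  calc finsetAvg (F i) (fun k' ↦ ‖⟪U k x, U k' x⟫_ℂ‖ ^ 2)
      ≤ ‖U k x‖ * (‖orbitOperator U x (F i) - T‖ * ‖U k x‖) :=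
        hself.symm.trans_le <| (norm_inner_le_norm _ _).trans <|
          mul_le_mul_of_nonneg_left (ContinuousLinearMap.le_opNorm _ _) (norm_nonneg _)
    _ = ‖orbitOperator U x (F i) - T‖ * ‖x‖ ^ 2 := by rw [hU.norm_map]; ring

end IsUnitaryRep

/-- The covariant GNS representation of a tracial state `ω` which is invariant under the action `τ`:
`j` is the canonical map into the GNS space, and the unitaries `U` implement `τ`. -/
structure IsTracialGNS {A G H : Type*} [Ring A] [StarRing A] [Algebra ℂ A] [Group G]
    [NormedAddCommGroup H] [InnerProductSpace ℂ H] (ω : A →ₗ[ℂ] ℂ) (τ : G → A ≃⋆ₐ[ℂ] A)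
    (j : A →ₗ[ℂ] H) (U : G → H →L[ℂ] H) : Prop where
  apply_one : ω 1 = 1
  apply_mul_comm (a b : A) : ω (a * b) = ω (b * a)
  action_one (a : A) : τ 1 a = a
  action_mul (g h : G) (a : A) : τ g (τ h a) = τ (g * h) a
  apply_action (g : G) (a : A) : ω (τ g a) = ω a
  denseRange : DenseRange j
  inner_map_map (a b : A) : ⟪j a, j b⟫_ℂ = ω (star a * b)
  unitary_map (g : G) (a : A) : U g (j a) = j (τ g a)

namespace IsTracialGNS

section Star

variable {A G H : Type*} [Ring A] [StarRing A] [Algebra ℂ A] [Group G]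
  [NormedAddCommGroup H] [InnerProductSpace ℂ H] {ω : A →ₗ[ℂ] ℂ} {τ : G → A ≃⋆ₐ[ℂ] A}
  {j : A →ₗ[ℂ] H} {U : G → H →L[ℂ] H}

lemma isUnitaryRep (S : IsTracialGNS ω τ j U) : IsUnitaryRep U where
  map_one := DFunLike.coe_injective <| S.denseRange.equalizer (map_continuous _)
    (map_continuous _) <| funext fun a ↦ by simp [S.unitary_map, S.action_one]
  map_mul g h := DFunLike.coe_injective <| S.denseRange.equalizer (map_continuous _)
    (map_continuous _) <| funext fun a ↦ by simp [S.unitary_map, S.action_mul]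
  inner_map_map g x y := by
    refine S.denseRange.induction_on₂ (p := fun x y ↦ ⟪U g x, U g y⟫_ℂ = ⟪x, y⟫_ℂ)
      (isClosed_eq (by fun_prop) (by fun_prop)) (fun a b ↦ ?_) x y
    rw [S.unitary_map, S.unitary_map, S.inner_map_map, S.inner_map_map, ← map_star, ← map_mul,
      S.apply_action]

lemma apply_mul_action (S : IsTracialGNS ω τ j U) (a b : A) (g : G) :
    ω (a * τ g b) = ⟪j (star a), U g (j b)⟫_ℂ := by
  rw [S.unitary_map, S.inner_map_map, star_star]

lemma norm_map_sq (S : IsTracialGNS ω τ j U) (a : A) : ((‖j a‖ ^ 2 : ℝ) : ℂ) = ω (star a * a) := by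
  rw [← S.inner_map_map, inner_self_eq_norm_sq_to_K]
  norm_cast

lemma norm_map_one (S : IsTracialGNS ω τ j U) : ‖j 1‖ = 1 := by
  have hsq := S.norm_map_sq 1
  rw [star_one, mul_one, S.apply_one] at hsq
  exact (pow_eq_one_iff_of_nonneg (norm_nonneg _) two_ne_zero).1 (by exact_mod_cast hsq)

lemma norm_map_star (S : IsTracialGNS ω τ j U) (a : A) : ‖j (star a)‖ = ‖j a‖ := by
  rw [← sq_eq_sq₀ (norm_nonneg _) (norm_nonneg _), ← Complex.ofReal_inj, S.norm_map_sq,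
    S.norm_map_sq, star_star, S.apply_mul_comm]

lemma norm_inner_orbit_star (S : IsTracialGNS ω τ j U) (a : A) (g h : G) :
    ‖⟪U g (j (star a)), U h (j (star a))⟫_ℂ‖ = ‖⟪U g (j a), U h (j a)⟫_ℂ‖ := by
  rw [norm_inner_symm]
  simp only [S.unitary_map, S.inner_map_map, map_star, star_star]
  rw [S.apply_mul_comm]

end Star

section CStar

variable {A G H : Type*} [CStarAlgebra A] [Group G] [NormedAddCommGroup H]
  [InnerProductSpace ℂ H] {ω : A →ₗ[ℂ] ℂ} {τ : G → A ≃⋆ₐ[ℂ] A} {j : A →ₗ[ℂ] H} {U : G → H →L[ℂ] H}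

lemma norm_map_mul_le (S : IsTracialGNS ω τ j U) (a b : A) : ‖j (a * b)‖ ≤ ‖a‖ * ‖j b‖ := by
  let _ : PartialOrder A := CStarAlgebra.spectralOrder A
  have : StarOrderedRing A := CStarAlgebra.spectralOrderedRing A
  obtain ⟨s, hs⟩ := CStarAlgebra.nonneg_iff_eq_star_mul_self.1
    (sub_nonneg.2 (CStarAlgebra.star_mul_le_algebraMap_norm_sq (a := a)))
  have hsq : star (s * b) * (s * b) = (‖a‖ ^ 2) • (star b * b) - star (a * b) * (a * b) := by
    rw [star_mul, mul_assoc, ← mul_assoc (star s), ← hs, star_mul, Algebra.algebraMap_eq_smul_one]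
    simp only [sub_mul, mul_sub, smul_mul_assoc, mul_smul_comm, one_mul, mul_assoc]
  have hnorm : ‖j (s * b)‖ ^ 2 = ‖a‖ ^ 2 * ‖j b‖ ^ 2 - ‖j (a * b)‖ ^ 2 := by
    rw [← Complex.ofReal_inj, S.norm_map_sq, hsq, map_sub, ← S.norm_map_sq (a * b),
      ← Complex.coe_smul, map_smul, ← S.norm_map_sq b]
    push_cast
    rfl
  refine le_of_sq_le_sq ?_ (by positivity)
  rw [mul_pow]
  linarith [sq_nonneg ‖j (s * b)‖]

lemma norm_map_mul_le' (S : IsTracialGNS ω τ j U) (a b : A) : ‖j (a * b)‖ ≤ ‖j a‖ * ‖b‖ := by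
  rw [← S.norm_map_star (a * b), star_mul, ← S.norm_map_star a, ← norm_star b, mul_comm]
  exact S.norm_map_mul_le _ _

lemma norm_map_le (S : IsTracialGNS ω τ j U) (a : A) : ‖j a‖ ≤ ‖a‖ := by
  simpa only [mul_one, S.norm_map_one] using S.norm_map_mul_le a 1

lemma map_mul_congr (S : IsTracialGNS ω τ j U) {a a' b b' : A} (ha : j a = j a') (hb : j b = j b') :
    j (a * b) = j (a' * b') := by
  have hleft : ‖j ((a - a') * b)‖ ≤ 0 := by
    simpa only [map_sub, ha, sub_self, norm_zero, zero_mul] using S.norm_map_mul_le' (a - a') b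
  have hright : ‖j (a' * (b - b'))‖ ≤ 0 := by
    simpa only [map_sub, hb, sub_self, norm_zero, mul_zero] using S.norm_map_mul_le a' (b - b')
  rw [norm_le_zero_iff, sub_mul, map_sub, sub_eq_zero] at hleft
  rw [norm_le_zero_iff, mul_sub, map_sub, sub_eq_zero] at hright
  exact hleft.trans hright

end CStar

end IsTracialGNS

namespace IsUnitaryRep

variable {G ι H : Type*} [CommGroup G] [NormedAddCommGroup H] [InnerProductSpace ℂ H]
  {U : G → H →L[ℂ] H} {l : Filter ι} {F : ι → Finset G}

lemma norm_finsetAvg_orbit_mul_right (hU : IsUnitaryRep U) (F : Finset G) (g : G) (y : H) :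
    ‖finsetAvg F fun h ↦ U (h * g) y‖ = ‖finsetAvg F fun h ↦ U h y‖ := by
  simp only [mul_comm _ g, hU.map_mul_apply, ← map_finsetAvg, hU.norm_map]

lemma norm_finsetAvg_orbit_le (hU : IsUnitaryRep U) (F : Finset G) {K : Finset G}
    (hK : K.Nonempty) (y : H) :
    ‖finsetAvg F fun g ↦ U g y‖ ≤
      ‖finsetAvg K fun k ↦ U k y‖ + ‖y‖ * finsetAvg K (shiftDefect F) := by
  let : InnerProductSpace ℝ H := InnerProductSpace.rclikeToReal ℂ H
  have hstat : IsStationaryFamily ℝ fun g ↦ U g y := fun g k m ↦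
    congrArg Complex.re (hU.isStationaryFamily_orbit y g k m)
  have hcard : (#K : ℝ) ≠ 0 := Nat.cast_ne_zero.2 hK.card_pos.ne'
  have hconvex := hstat.norm_finsetAvg_le (s := K) (w := fun _ ↦ (#K : ℝ)⁻¹)
    (fun _ _ ↦ by positivity) (by simp [hcard]) id F
  simp only [id, ← Finset.smul_sum, ← Finset.mul_sum, hU.norm_map] at hconvex
  rwa [mul_left_comm] at hconvex

lemma eventually_forall_norm_finsetAvg_orbit_le (hU : IsUnitaryRep U) (hF : IsFinsetFoelner l F)
    {K : Finset G} (hK : K.Nonempty) (M : ℝ) {ε : ℝ} (hε : 0 < ε) :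
    ∀ᶠ i in l, ∀ y : H, ‖y‖ ≤ M → ∀ g₂,
      ‖finsetAvg (F i) fun g ↦ U (g * g₂) y‖ ≤ ‖finsetAvg K fun k ↦ U k y‖ + ε := by
  have hdefect : Tendsto (fun i ↦ M * finsetAvg K (shiftDefect (F i))) l
      (𝓝 (M * ((#K : ℝ)⁻¹ • ∑ _k ∈ K, 0))) :=
    ((tendsto_finsetSum K fun k _ ↦ hF.tendsto_shiftDefect k).const_smul _).const_mul M
  simp only [Finset.sum_const_zero, smul_zero, mul_zero] at hdefect
  filter_upwards [hdefect.eventually_le_const hε] with i hi y hy g₂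
  rw [hU.norm_finsetAvg_orbit_mul_right]
  refine (hU.norm_finsetAvg_orbit_le (F i) hK y).trans ?_
  have hnonneg : 0 ≤ finsetAvg K (shiftDefect (F i)) :=
    finsetAvg_nonneg fun k _ ↦ by rw [shiftDefect]; positivity
  gcongr
  exact (mul_le_mul_of_nonneg_right hy hnonneg).trans hi

end IsUnitaryRep

namespace IsTracialGNS

section MeanErgodic

variable {A G H ι : Type*} [Ring A] [StarRing A] [Algebra ℂ A] [CommGroup G]
  [NormedAddCommGroup H] [InnerProductSpace ℂ H] {ω : A →ₗ[ℂ] ℂ} {τ : G → A ≃⋆ₐ[ℂ] A}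
  {j : A →ₗ[ℂ] H} {U : G → H →L[ℂ] H} {l : Filter ι} {F : ι → Finset G}

/-- By the mean ergodic theorem the limit does not depend on the Følner net, so ergodicity along one
of them identifies it. -/
lemma tendsto_finsetAvg_orbit [CompleteSpace H] (S : IsTracialGNS ω τ j U) {κ : Type*}
    {l₀ : Filter κ} [l₀.NeBot] {F₀ : κ → Finset G} (hF₀ : IsFinsetFoelner l₀ F₀)
    (hErg : ∀ a b : A, Tendsto (fun i ↦ finsetAvg (F₀ i) fun g ↦ ω (a * τ g b)) l₀
      (𝓝 (ω a * ω b)))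
    (hF : IsFinsetFoelner l F) (b : A) :
    Tendsto (fun i ↦ finsetAvg (F i) fun g ↦ U g (j b)) l (𝓝 (ω b • j 1)) := by
  obtain ⟨p, hp⟩ := (S.isUnitaryRep.isStationaryFamily_orbit (j b)).exists_forall_tendsto_finsetAvg
  have hp_eq : p = ω b • j 1 := S.denseRange.eq_of_inner_right ℂ fun a ↦ by
    have hinner : Tendsto (fun i ↦ finsetAvg (F₀ i) fun g ↦ ω (star a * τ g b)) l₀
        (𝓝 ⟪j a, p⟫_ℂ) := by
      simp only [S.apply_mul_action, star_star, ← inner_finsetAvg_right]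
      exact tendsto_const_nhds.inner (tendsto_map'_iff.1 (hp _ hF₀.map))
    rw [tendsto_nhds_unique hinner (hErg (star a) b), inner_smul_right, S.inner_map_map, mul_one,
      mul_comm]
  exact hp_eq ▸ tendsto_map'_iff.1 (hp _ hF.map)

lemma norm_finsetAvg_apply_mul_action_sub_le (S : IsTracialGNS ω τ j U) (F : Finset G) (a b : A)
    (g : G) :
    ‖finsetAvg F (fun h ↦ ω (a * τ (h * g) b)) - ω a * ω b‖ ≤
      ‖j (star a)‖ * ‖finsetAvg F (fun h ↦ U h (j b)) - ω b • j 1‖ := by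
  have havg : finsetAvg F (fun h ↦ ω (a * τ (h * g) b)) =
      ⟪j (star a), U g (finsetAvg F fun h ↦ U h (j b))⟫_ℂ := by
    simp only [S.apply_mul_action, mul_comm _ g, S.isUnitaryRep.map_mul_apply, map_finsetAvg,
      inner_finsetAvg_right]
  have hlim : ω a * ω b = ⟪j (star a), U g (ω b • j 1)⟫_ℂ := by
    rw [map_smul, S.unitary_map, inner_smul_right, S.inner_map_map, star_star, map_one,
      mul_one, mul_comm]
  rw [havg, hlim, ← inner_sub_right, ← map_sub]
  exact (norm_inner_le_norm _ _).trans_eq (by rw [S.isUnitaryRep.norm_map])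

lemma eventually_forall_norm_finsetAvg_apply_mul_action_sub_le (S : IsTracialGNS ω τ j U) {b : A}
    (hmean : Tendsto (fun i ↦ finsetAvg (F i) fun h ↦ U h (j b)) l (𝓝 (ω b • j 1))) (a : A)
    {ε : ℝ} (hε : 0 < ε) :
    ∀ᶠ i in l, ∀ g₁, ‖finsetAvg (F i) (fun h ↦ ω (a * τ (h * g₁) b)) - ω a * ω b‖ ≤ ε := by
  have hlim : Tendsto (fun i ↦ ‖j (star a)‖ * ‖finsetAvg (F i) (fun h ↦ U h (j b)) - ω b • j 1‖) l
      (𝓝 0) := by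
    simpa using (tendsto_iff_norm_sub_tendsto_zero.1 hmean).const_mul ‖j (star a)‖
  exact (hlim.eventually_le_const hε).mono fun i hi g₁ ↦
    (S.norm_finsetAvg_apply_mul_action_sub_le (F i) a b g₁).trans hi

end MeanErgodic

section Gram

variable {A G H ι : Type*} [Ring A] [StarRing A] [Algebra ℂ A] [CommGroup G]
  [NormedAddCommGroup H] [InnerProductSpace ℂ H] {ω : A →ₗ[ℂ] ℂ} {τ : G → A ≃⋆ₐ[ℂ] A}
  {j : A →ₗ[ℂ] H} {U : G → H →L[ℂ] H} {l : Filter ι} {F : ι → Finset G}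

lemma tendsto_finsetAvg_norm_inner_mul_norm_inner [CompleteSpace H] [l.NeBot]
    (S : IsTracialGNS ω τ j U) (hF : IsFinsetFoelner l F) {a b : A}
    (hflight : j a ∈ flightVectors U ∨ j b ∈ flightVectors U ∨ j (star b) ∈ flightVectors U) :
    Tendsto (fun i ↦ finsetAvg (F i) fun k ↦ finsetAvg (F i) fun k' ↦
      ‖⟪U k (j b), U k' (j b)⟫_ℂ‖ * ‖⟪U k (j a), U k' (j a)⟫_ℂ‖) l (𝓝 0) := by
  have hprod {x : H} (hx : x ∈ flightVectors U) (y : H) :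
      Tendsto (fun i ↦ finsetAvg (F i) fun k ↦ finsetAvg (F i) fun k' ↦
        ‖⟪U k x, U k' x⟫_ℂ‖ * ‖⟪U k y, U k' y⟫_ℂ‖) l (𝓝 0) := by
    have hsq :=
      (S.isUnitaryRep.tendsto_finsetAvg_norm_inner_sq_of_mem_flightVectors hx hF).sqrt.const_mul
        (‖y‖ * ‖y‖)
    rw [Real.sqrt_zero, mul_zero] at hsq
    refine squeeze_zero (fun i ↦ finsetAvg_nonneg fun k _ ↦ finsetAvg_nonneg fun k' _ ↦ by
      positivity) (fun i ↦ finsetAvg_finsetAvg_mul_le (by positivity)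
        (fun _ _ ↦ norm_nonneg _) fun k k' ↦ ?_) hsq
    exact (norm_inner_le_norm _ _).trans_eq (by simp only [S.isUnitaryRep.norm_map])
  rcases hflight with ha | hb | hb
  · simpa only [mul_comm] using hprod ha (j b)
  · exact hprod hb (j a)
  · simpa only [S.norm_inner_orbit_star] using hprod hb (j a)

/-- The trace property separates the correlations of `a` from those of `b`. -/
lemma inner_orbit_action_mul (S : IsTracialGNS ω τ j U) (a b : A) (h k l : G) :
    ⟪U k (j (τ h a * b)), U l (j (τ h a * b))⟫_ℂ =
      ω (τ l b * star (τ k b) * τ h (star (τ k a) * τ l a)) := by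
  simp only [S.unitary_map, S.inner_map_map, map_mul, map_star, star_mul, S.action_mul, mul_comm h]
  rw [mul_assoc, mul_assoc, S.apply_mul_comm (τ l b)]
  simp only [mul_assoc]

lemma finsetAvg_norm_sq_orbit_action_mul (S : IsTracialGNS ω τ j U) (F K : Finset G) (a b : A)
    (g : G) :
    ((finsetAvg F fun h ↦ ‖finsetAvg K fun k ↦ U k (j (τ (h * g) a * b))‖ ^ 2 : ℝ) : ℂ) =
      finsetAvg K fun k ↦ finsetAvg K fun l ↦ finsetAvg F fun h ↦
        ω (τ l b * star (τ k b) * τ (h * g) (star (τ k a) * τ l a)) := by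
  rw [← Complex.ofRealCLM_apply, map_finsetAvg]
  simp only [Complex.ofRealCLM_apply, norm_finsetAvg_sq, S.inner_orbit_action_mul]
  rw [finsetAvg_comm]
  exact congrArg _ (funext fun k ↦ finsetAvg_comm F K _)

lemma eventually_forall_finsetAvg_norm_sq_le (S : IsTracialGNS ω τ j U)
    (hmean : ∀ b, Tendsto (fun i ↦ finsetAvg (F i) fun h ↦ U h (j b)) l (𝓝 (ω b • j 1)))
    (K : Finset G) (a b : A) {δ : ℝ} (hδ : 0 < δ) :
    ∀ᶠ i in l, ∀ g₁,
      finsetAvg (F i) (fun h ↦ ‖finsetAvg K fun k ↦ U k (j (τ (h * g₁) a * b))‖ ^ 2) ≤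
        finsetAvg K (fun k ↦ finsetAvg K fun k' ↦
          ‖⟪U k (j b), U k' (j b)⟫_ℂ‖ * ‖⟪U k (j a), U k' (j a)⟫_ℂ‖) + δ := by
  have hcorr : ∀ᶠ i in l, ∀ k ∈ K, ∀ k' ∈ K, ∀ g₁,
      ‖finsetAvg (F i) (fun h ↦ ω (τ k' b * star (τ k b) * τ (h * g₁) (star (τ k a) * τ k' a))) -
        ω (τ k' b * star (τ k b)) * ω (star (τ k a) * τ k' a)‖ ≤ δ :=
    (eventually_all_finset K).2 fun k _ ↦ (eventually_all_finset K).2 fun k' _ ↦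
      S.eventually_forall_norm_finsetAvg_apply_mul_action_sub_le (hmean _) _ hδ
  filter_upwards [hcorr] with i hi g₁
  have hterm (k) (hk : k ∈ K) (k') (hk' : k' ∈ K) :
      ‖finsetAvg (F i) fun h ↦ ω (τ k' b * star (τ k b) * τ (h * g₁) (star (τ k a) * τ k' a))‖ ≤
        ‖⟪U k (j b), U k' (j b)⟫_ℂ‖ * ‖⟪U k (j a), U k' (j a)⟫_ℂ‖ + δ := by
    rw [S.unitary_map k b, S.unitary_map k' b, S.inner_map_map, S.apply_mul_comm, S.unitary_map k a,
      S.unitary_map k' a, S.inner_map_map, ← norm_mul]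
    exact (norm_le_norm_add_norm_sub' _ _).trans (by gcongr; exact hi k hk k' hk' g₁)
  rw [← Real.norm_of_nonneg (finsetAvg_nonneg fun h _ ↦ sq_nonneg _), ← Complex.norm_real,
    S.finsetAvg_norm_sq_orbit_action_mul]
  calc _ ≤ finsetAvg K fun k ↦ finsetAvg K fun k' ↦
        ‖⟪U k (j b), U k' (j b)⟫_ℂ‖ * ‖⟪U k (j a), U k' (j a)⟫_ℂ‖ + δ :=
      (norm_finsetAvg_le _ _).trans <| finsetAvg_mono fun k hk ↦ (norm_finsetAvg_le _ _).trans <|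
        finsetAvg_mono fun k' hk' ↦ hterm k hk k' hk'
    _ ≤ _ := (finsetAvg_mono fun k _ ↦ finsetAvg_add_const_le hδ.le K _).trans
      (finsetAvg_add_const_le hδ.le K _)

end Gram

end IsTracialGNS

lemma mul_div_add_one_le {x ε : ℝ} (hx : 0 ≤ x) (hε : 0 ≤ ε) : x * (ε / (x + 1)) ≤ ε := by
  rw [mul_div_left_comm]
  exact mul_le_of_le_one_right hε ((div_le_one (by positivity)).2 (by linarith))

namespace IsTracialGNS

variable {A G H ι : Type*} [CStarAlgebra A] [CommGroup G] [NormedAddCommGroup H]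
  [InnerProductSpace ℂ H] {ω : A →ₗ[ℂ] ℂ} {τ : G → A ≃⋆ₐ[ℂ] A} {j : A →ₗ[ℂ] H} {U : G → H →L[ℂ] H}
  {l : Filter ι} {F F' : ι → Finset G}

/-- The van der Corput step: replace the average over `F'` by the average over a fixed `K`, square,
and separate `a` from `b` by ergodicity. -/
theorem eventually_forall_finsetAvg_norm_finsetAvg_le [CompleteSpace H] [l.NeBot]
    (S : IsTracialGNS ω τ j U)
    (hmean : ∀ b, Tendsto (fun i ↦ finsetAvg (F i) fun h ↦ U h (j b)) l (𝓝 (ω b • j 1)))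
    (hF' : IsFinsetFoelner l F') {a b : A}
    (hflight : j a ∈ flightVectors U ∨ j b ∈ flightVectors U ∨ j (star b) ∈ flightVectors U)
    {ε : ℝ} (hε : 0 < ε) :
    ∀ᶠ i in l, ∀ g₁ g₂, finsetAvg (F i) (fun h ↦
      ‖finsetAvg (F' i) fun g ↦ j (τ (g * g₂) (τ (h * g₁) a * b))‖) ≤ ε := by
  have hδ : 0 < (ε / 2) ^ 2 / 2 := by positivity
  obtain ⟨m, hm, hK⟩ := (((S.tendsto_finsetAvg_norm_inner_mul_norm_inner hF'
    hflight).eventually_le_const hδ).and hF'.eventually_nonempty).exists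
  set K := F' m
  filter_upwards [S.eventually_forall_finsetAvg_norm_sq_le hmean K a b hδ,
    S.isUnitaryRep.eventually_forall_norm_finsetAvg_orbit_le hF' hK (‖a‖ * ‖b‖) (half_pos hε)]
    with i hsq hsmooth g₁ g₂
  set D : G → ℝ := fun h ↦ ‖finsetAvg K fun k ↦ U k (j (τ (h * g₁) a * b))‖
  have hnorm (h : G) : ‖j (τ (h * g₁) a * b)‖ ≤ ‖a‖ * ‖b‖ :=
    (S.norm_map_le _).trans <| (norm_mul_le _ _).trans_eq <| by
      rw [NonUnitalStarAlgHom.norm_map (τ (h * g₁)) (τ (h * g₁)).injective]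
  have hD_sq : finsetAvg (F i) D ^ 2 ≤ (ε / 2) ^ 2 := by
    linarith [finsetAvg_sq_le (F i) D, hsq g₁]
  have hD : finsetAvg (F i) D ≤ ε / 2 := le_of_sq_le_sq hD_sq (half_pos hε).le
  calc finsetAvg (F i) (fun h ↦ ‖finsetAvg (F' i) fun g ↦ j (τ (g * g₂) (τ (h * g₁) a * b))‖)
      ≤ finsetAvg (F i) fun h ↦ D h + ε / 2 := finsetAvg_mono fun h _ ↦ by
        simpa only [D, S.unitary_map] using hsmooth _ (hnorm h) g₂
    _ ≤ finsetAvg (F i) D + ε / 2 := finsetAvg_add_const_le (half_pos hε).le _ _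
    _ ≤ ε := by linarith

lemma norm_finsetAvg_map_mul_le (S : IsTracialGNS ω τ j U) (F : Finset G) (f : G → A) (c : A) :
    ‖finsetAvg F fun g ↦ j (f g * c)‖ ≤ ‖c‖ * ‖finsetAvg F fun g ↦ j (f g)‖ := by
  have hmul : finsetAvg F (fun g ↦ f g * c) = finsetAvg F f * c :=
    (map_finsetAvg (AddMonoidHom.mulRight c) F f).symm
  rw [← map_finsetAvg, ← map_finsetAvg, hmul, mul_comm ‖c‖]
  exact S.norm_map_mul_le' _ _

theorem eventually_forall_norm_finsetAvg_finsetAvg_le [CompleteSpace H] [l.NeBot]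
    (S : IsTracialGNS ω τ j U)
    (hmean : ∀ b, Tendsto (fun i ↦ finsetAvg (F i) fun h ↦ U h (j b)) l (𝓝 (ω b • j 1)))
    (hF' : IsFinsetFoelner l F') {a b : A}
    (hflight : j a ∈ flightVectors U ∨ j b ∈ flightVectors U ∨ j (star b) ∈ flightVectors U)
    (c : A) {ε : ℝ} (hε : 0 < ε) :
    ∀ᶠ i in l, ∀ g₁ g₂, ‖finsetAvg (F i) fun h ↦ finsetAvg (F' i) fun g ↦
      j (τ (g * g₂ * (h * g₁)) a * τ (g * g₂) b * τ (h * g₁) c)‖ ≤ ε := by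
  filter_upwards [S.eventually_forall_finsetAvg_norm_finsetAvg_le hmean hF' hflight
    (ε := ε / (‖c‖ + 1)) (by positivity)] with i hi g₁ g₂
  have hterm (h : G) :
      ‖finsetAvg (F' i) fun g ↦ j (τ (g * g₂ * (h * g₁)) a * τ (g * g₂) b * τ (h * g₁) c)‖ ≤
        ‖c‖ * ‖finsetAvg (F' i) fun g ↦ j (τ (g * g₂) (τ (h * g₁) a * b))‖ := by
    simp only [← S.action_mul (_ * g₂), ← map_mul]
    exact (S.norm_finsetAvg_map_mul_le _ _ _).trans_eq (by
      rw [NonUnitalStarAlgHom.norm_map (τ (h * g₁)) (τ (h * g₁)).injective])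
  calc _ ≤ finsetAvg (F i) fun h ↦
        ‖c‖ * ‖finsetAvg (F' i) fun g ↦ j (τ (g * g₂) (τ (h * g₁) a * b))‖ :=
      (norm_finsetAvg_le _ _).trans (finsetAvg_mono fun h _ ↦ hterm h)
    _ ≤ ‖c‖ * (ε / (‖c‖ + 1)) := by
      rw [finsetAvg_const_mul]
      exact mul_le_mul_of_nonneg_left (hi g₁ g₂) (norm_nonneg c)
    _ ≤ ε := mul_div_add_one_le (norm_nonneg c) hε.le

lemma norm_map_action_mul_sub_le (S : IsTracialGNS ω τ j U) (a b c : A) (g h : G) :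
    ‖j (τ (g * h) a * τ g b * τ h c) - j (τ (h * g) a * τ h c * τ g b)‖ ≤
      ‖a‖ * ‖b * τ (h * g⁻¹) c - τ (h * g⁻¹) c * b‖ := by
  have hcomm : τ g (b * τ (h * g⁻¹) c - τ (h * g⁻¹) c * b) = τ g b * τ h c - τ h c * τ g b := by
    simp only [map_sub, map_mul, S.action_mul, mul_comm h, mul_inv_cancel_left]
  rw [mul_comm h g, mul_assoc, mul_assoc, ← map_sub, ← mul_sub, ← hcomm]
  refine (S.norm_map_le _).trans ((norm_mul_le _ _).trans_eq ?_)
  rw [NonUnitalStarAlgHom.norm_map (τ _) (τ _).injective,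
    NonUnitalStarAlgHom.norm_map (τ _) (τ _).injective]

lemma finsetAvg_norm_map_action_mul_sub_le (S : IsTracialGNS ω τ j U) (F : Finset G) (a b c : A)
    (g g₁ : G) :
    finsetAvg F (fun h ↦ ‖j (τ (g * (h * g₁)) a * τ g b * τ (h * g₁) c) -
        j (τ (h * g₁ * g) a * τ (h * g₁) c * τ g b)‖) ≤
      ‖a‖ * finsetAvg F fun h ↦
        ‖b * τ (h * (g₁ * g⁻¹)) c - τ (h * (g₁ * g⁻¹)) c * b‖ := by
  rw [← finsetAvg_const_mul]
  exact finsetAvg_mono fun h _ ↦ by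
    simpa only [mul_assoc h] using S.norm_map_action_mul_sub_le a b c g (h * g₁)

/-- Asymptotic abelianness lets `b` and `c` change places, which reduces to the previous case with
the two Følner nets interchanged. -/
theorem eventually_forall_norm_finsetAvg_finsetAvg_le_of_commutator [CompleteSpace H] [l.NeBot]
    (S : IsTracialGNS ω τ j U) (hF : IsFinsetFoelner l F)
    (hmean' : ∀ b, Tendsto (fun i ↦ finsetAvg (F' i) fun h ↦ U h (j b)) l (𝓝 (ω b • j 1)))
    (a : A) {b c : A} (hflight : j (star c) ∈ flightVectors U)
    (hcomm : ∀ ε > (0 : ℝ), ∀ᶠ i in l, ∀ g₁,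
      finsetAvg (F i) (fun h ↦ ‖b * τ (h * g₁) c - τ (h * g₁) c * b‖) ≤ ε)
    {ε : ℝ} (hε : 0 < ε) :
    ∀ᶠ i in l, ∀ g₁ g₂, ‖finsetAvg (F i) fun h ↦ finsetAvg (F' i) fun g ↦
      j (τ (g * g₂ * (h * g₁)) a * τ (g * g₂) b * τ (h * g₁) c)‖ ≤ ε := by
  filter_upwards [S.eventually_forall_norm_finsetAvg_finsetAvg_le hmean' hF (a := a)
    (Or.inr (Or.inr hflight)) b (half_pos hε), hcomm (ε / 2 / (‖a‖ + 1)) (by positivity)]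
    with i hswap hi g₁ g₂
  have hdiff (g : G) : finsetAvg (F i) (fun h ↦
      ‖j (τ (g * g₂ * (h * g₁)) a * τ (g * g₂) b * τ (h * g₁) c) -
        j (τ (h * g₁ * (g * g₂)) a * τ (h * g₁) c * τ (g * g₂) b)‖) ≤ ε / 2 :=
    (S.finsetAvg_norm_map_action_mul_sub_le (F i) a b c (g * g₂) g₁).trans <|
      (mul_le_mul_of_nonneg_left (hi _) (norm_nonneg a)).trans
        (mul_div_add_one_le (norm_nonneg a) (half_pos hε).le)
  have hsub : ‖finsetAvg (F' i) (fun g ↦ finsetAvg (F i) fun h ↦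
        j (τ (g * g₂ * (h * g₁)) a * τ (g * g₂) b * τ (h * g₁) c)) -
      finsetAvg (F' i) (fun g ↦ finsetAvg (F i) fun h ↦
        j (τ (h * g₁ * (g * g₂)) a * τ (h * g₁) c * τ (g * g₂) b))‖ ≤ ε / 2 := by
    simp only [← finsetAvg_sub]
    exact (norm_finsetAvg_le _ _).trans <| finsetAvg_le_of_forall_le (half_pos hε).le fun g _ ↦
      (norm_finsetAvg_le _ _).trans (hdiff g)
  rw [finsetAvg_comm]
  linarith [norm_le_norm_add_norm_sub' _ _ |>.trans (add_le_add (hswap g₂ g₁) hsub)]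

end IsTracialGNS

section Atoms

variable {X Y Z E : Type*} [MeasurableSpace X] [MeasurableSpace Y]

/-- `f` is constant on the atoms of the σ-algebra of its domain. On a countable space this amounts
to measurability, but it is stable under pointwise operations on non-separable targets. -/
def IsConstantOnAtoms (f : X → Z) : Prop :=
  ∀ ⦃x y⦄, y ∈ measurableAtom x → f y = f x

lemma isConstantOnAtoms_of_measurable [MeasurableSpace Z] [MeasurableSingletonClass Z] {f : X → Z}
    (hf : Measurable f) : IsConstantOnAtoms f := fun x _ hy ↦
  mem_of_mem_measurableAtom hy (hf (measurableSet_singleton (f x))) rfl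

namespace IsConstantOnAtoms

lemma comp {f : Y → Z} (hf : IsConstantOnAtoms f) {φ : X → Y} (hφ : Measurable φ) :
    IsConstantOnAtoms fun x ↦ f (φ x) := fun _ _ hy ↦ hf <| Set.mem_iInter₂.2 fun _ hxs ↦
  Set.mem_iInter.2 fun hs ↦ mem_of_mem_measurableAtom hy (hφ hs) hxs

lemma finsetAvg {α : Type*} [AddCommMonoid E] [Module ℝ E] (K : Finset α) {f : X → α → E}
    (hf : ∀ y, IsConstantOnAtoms fun x ↦ f x y) :
    IsConstantOnAtoms fun x ↦ finsetAvg K (f x) := fun _ _ hy ↦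
  congrArg (_root_.finsetAvg K) <| funext fun z ↦ hf z hy

lemma measurableSet_preimage [Countable X] {f : X → Z} (hf : IsConstantOnAtoms f) (s : Set Z) :
    MeasurableSet (f ⁻¹' s) := by
  have hunion : f ⁻¹' s = ⋃ x ∈ f ⁻¹' s, measurableAtom x := Set.Subset.antisymm
    (fun x hx ↦ Set.mem_biUnion hx (mem_measurableAtom_self x))
    (Set.iUnion₂_subset fun x hx y hy ↦ by rwa [Set.mem_preimage, hf hy])
  rw [hunion]
  exact .biUnion (Set.to_countable _) fun x _ ↦ .measurableAtom_of_countable x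

lemma stronglyMeasurable [Countable X] [TopologicalSpace Z]
    [TopologicalSpace.PseudoMetrizableSpace Z] {f : X → Z} (hf : IsConstantOnAtoms f) :
    StronglyMeasurable f := by
  borelize Z
  exact stronglyMeasurable_iff_measurable_separable.2
    ⟨fun s _ ↦ hf.measurableSet_preimage s, (Set.countable_range f).isSeparable⟩

end IsConstantOnAtoms

end Atoms

section CountingMeasure

variable {X E : Type*} [MeasurableSpace X] [NormedAddCommGroup E] [NormedSpace ℝ E]
  [CompleteSpace E]

lemma restrict_count_coe_finset {F : Finset X} (hF : MeasurableSet (F : Set X)) :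
    (Measure.count : Measure X).restrict F = ∑ x ∈ F, Measure.dirac x := by
  classical
  ext s hs
  have hinter : s ∩ F = (F.filter (· ∈ s) : Finset X) := by
    ext x
    simp [and_comm]
  have hmeas : MeasurableSet ((F.filter (· ∈ s) : Finset X) : Set X) := hinter ▸ hs.inter hF
  rw [Measure.restrict_apply hs, hinter, Measure.count_apply_finset' hmeas,
    Measure.finsetSum_apply]
  simp [Measure.dirac_apply' _ hs, Set.indicator_apply]

lemma setIntegral_count_coe_finset {F : Finset X} (hF : MeasurableSet (F : Set X)) {f : X → E}
    (hf : StronglyMeasurable f) : ∫ x in F, f x ∂Measure.count = ∑ x ∈ F, f x := by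
  rw [restrict_count_coe_finset hF, integral_finsetSum_measure fun x _ ↦
    integrable_dirac' hf (by simp)]
  simp only [integral_dirac' f _ hf]

lemma inv_count_smul_setIntegral_mul_singleton [Group X] [MeasurableMul X] [Countable X]
    {F : Finset X} (hF : MeasurableSet (F : Set X)) (g : X) {f : X → E}
    (hf : IsConstantOnAtoms f) :
    (Measure.count (F : Set X)).toReal⁻¹ • ∫ x in (F : Set X) * {g}, f x ∂Measure.count =
      finsetAvg F fun x ↦ f (x * g) := by
  classical
  have himage : (F : Set X) * {g} = (F.image (· * g) : Finset X) := by
    rw [Set.mul_singleton, Finset.coe_image]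
  have hmeas : MeasurableSet ((F.image (· * g) : Finset X) : Set X) := by
    rw [Finset.coe_image]
    exact (MeasurableEquiv.mulRight g).measurableSet_image.2 hF
  rw [himage, setIntegral_count_coe_finset hmeas hf.stronglyMeasurable,
    Finset.sum_image (mul_left_injective g).injOn, Measure.count_apply_finset' hF,
    ENNReal.toReal_natCast, finsetAvg]

lemma inv_count_mul_count_smul_setIntegral_setIntegral [Group X] [MeasurableMul X] [Countable X]
    {F F' : Finset X} (hF : MeasurableSet (F : Set X)) (hF' : MeasurableSet (F' : Set X))
    (g₁ g₂ : X) {f : X → X → E} (hf : ∀ h, IsConstantOnAtoms (f h))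
    (hf' : ∀ g, IsConstantOnAtoms fun h ↦ f h g) :
    ((Measure.count (F : Set X)).toReal * (Measure.count (F' : Set X)).toReal)⁻¹ •
        ∫ h in (F : Set X) * {g₁}, ∫ g in (F' : Set X) * {g₂}, f h g ∂Measure.count ∂Measure.count =
      finsetAvg F fun h ↦ finsetAvg F' fun g ↦ f (h * g₁) (g * g₂) := by
  rw [mul_inv, mul_smul, ← integral_smul]
  simp only [inv_count_smul_setIntegral_mul_singleton hF' g₂ (hf _)]
  exact inv_count_smul_setIntegral_mul_singleton hF g₁ (.finsetAvg F' fun g ↦ hf' (g * g₂))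

end CountingMeasure

section CountingFoelner

variable {G ι : Type*} [MeasurableSpace G] {l : Filter ι} {Λ : ι → Set G}

lemma isFoelner_count_of_tendsto_toReal [CommGroup G] [MeasurableMul G]
    (hmeas : ∀ i, MeasurableSet (Λ i))
    (hfin : ∀ᶠ i in l, 0 < Measure.count (Λ i) ∧ Measure.count (Λ i) < ⊤)
    (hshift : ∀ g : G, Tendsto (fun i ↦ (Measure.count (symmDiff (Λ i) (Λ i * {g}))).toReal /
      (Measure.count (Λ i)).toReal) l (𝓝 0)) :
    IsFoelner G Measure.count l Λ where
  eventually_measurableSet := .of_forall hmeas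
  eventually_meas_ne_zero := hfin.mono fun _ h ↦ h.1.ne'
  eventually_meas_ne_top := hfin.mono fun _ h ↦ h.2.ne
  tendsto_meas_smul_symmDiff g := by
    have hofReal := ENNReal.tendsto_ofReal (hshift g)
    rw [ENNReal.ofReal_zero] at hofReal
    refine hofReal.congr' (hfin.mono fun i ⟨hpos, htop⟩ ↦ ?_)
    have hsmul : symmDiff (Λ i) (Λ i * {g}) = symmDiff (g • Λ i) (Λ i) := by
      rw [symmDiff_comm, mul_comm, ← smul_eq_mul, Set.singleton_smul]
    have hfinite : (Λ i).Finite := (Measure.count_apply_lt_top' (hmeas i)).1 htop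
    have hcount : Measure.count (symmDiff (g • Λ i) (Λ i)) ≠ ⊤ :=
      ((Measure.count_apply_lt_top' (((hmeas i).const_smul g).symmDiff (hmeas i))).2
        (hfinite.smul_set.symmDiff hfinite)).ne
    rw [hsmul, ← ENNReal.toReal_div, ENNReal.ofReal_toReal (ENNReal.div_ne_top hcount hpos.ne')]

lemma shiftDefect_eq_toReal_count [Group G] [MeasurableMul G] {F : Finset G}
    (hF : MeasurableSet (F : Set G)) (g : G) :
    shiftDefect F g = (Measure.count (symmDiff (g • (F : Set G)) F) /
      Measure.count (F : Set G)).toReal := by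
  classical
  have hcoe : symmDiff (g • (F : Set G)) F = (symmDiff (g • F) F : Finset G) := by
    rw [Finset.coe_symmDiff, Finset.coe_smul_finset]
  have hmeas : MeasurableSet ((symmDiff (g • F) F : Finset G) : Set G) :=
    hcoe ▸ (hF.const_smul g).symmDiff hF
  rw [hcoe, Measure.count_apply_finset' hmeas, Measure.count_apply_finset' hF, ENNReal.toReal_div,
    ENNReal.toReal_natCast, ENNReal.toReal_natCast, shiftDefect]

lemma exists_isFinsetFoelner_of_isFoelner_count [Group G] [MeasurableMul G] [l.NeBot]
    (hΛ : IsFoelner G Measure.count l Λ) :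
    ∃ F : ι → Finset G, IsFinsetFoelner l F ∧
      ∀ᶠ i in l, (F i : Set G) = Λ i ∧ MeasurableSet (F i : Set G) := by
  have hfinite : ∀ᶠ i in l, ∃ s : Finset G, (s : Set G) = Λ i ∧ MeasurableSet (s : Set G) := by
    filter_upwards [hΛ.eventually_measurableSet, hΛ.eventually_meas_ne_top] with i hmeas htop
    obtain ⟨s, hs⟩ := ((Measure.count_apply_lt_top' hmeas).1 htop.lt_top).exists_finset_coe
    exact ⟨s, hs, hs ▸ hmeas⟩
  obtain ⟨F, hF⟩ := hfinite.choice
  refine ⟨F, ⟨?_, fun g ↦ ?_⟩, hF⟩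
  · filter_upwards [hF, hΛ.eventually_meas_ne_zero] with i hi hpos
    rwa [← Finset.coe_nonempty, hi.1, ← Measure.count_ne_zero_iff]
  · have htoReal := (ENNReal.tendsto_toReal ENNReal.zero_ne_top).comp
      (hΛ.tendsto_meas_smul_symmDiff g)
    refine htoReal.congr' (hF.mono fun i hi ↦ ?_)
    have hdefect := shiftDefect_eq_toReal_count hi.2 g
    rw [hi.1] at hdefect
    exact hdefect.symm

end CountingFoelner

section Measurability

variable {A G H : Type*} [CStarAlgebra A] [NormedAddCommGroup H]
  [InnerProductSpace ℂ H] {ω : A →ₗ[ℂ] ℂ} {τ : G → A ≃⋆ₐ[ℂ] A} {j : A →ₗ[ℂ] H} {U : G → H →L[ℂ] H}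

namespace IsTracialGNS

lemma isConstantOnAtoms_orbit [Group G] [MeasurableSpace G] (S : IsTracialGNS ω τ j U)
    (hτ_meas : ∀ a b : A, Measurable fun g ↦ ω (a * τ g b)) (b : A) :
    IsConstantOnAtoms fun g ↦ j (τ g b) := fun g h hh ↦
  S.denseRange.eq_of_inner_right ℂ fun a ↦ by
    rw [S.inner_map_map, S.inner_map_map]
    exact isConstantOnAtoms_of_measurable (hτ_meas (star a) b) hh

lemma isConstantOnAtoms_map_mul {X : Type*} [MeasurableSpace X] [Group G]
    (S : IsTracialGNS ω τ j U) {f f' : X → A} (hf : IsConstantOnAtoms fun x ↦ j (f x))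
    (hf' : IsConstantOnAtoms fun x ↦ j (f' x)) : IsConstantOnAtoms fun x ↦ j (f x * f' x) :=
  fun _ _ hy ↦ S.map_mul_congr (hf hy) (hf' hy)

lemma inv_count_mul_count_smul_setIntegral_orbit [CommGroup G] [Countable G]
    [MeasurableSpace G] [MeasurableMul G] [CompleteSpace H] (S : IsTracialGNS ω τ j U)
    (hτ_meas : ∀ a b : A, Measurable fun g ↦ ω (a * τ g b)) {F F' : Finset G}
    (hF : MeasurableSet (F : Set G)) (hF' : MeasurableSet (F' : Set G)) (a b c : A) (g₁ g₂ : G) :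
    ((Measure.count (F : Set G)).toReal * (Measure.count (F' : Set G)).toReal)⁻¹ •
        ∫ h in (F : Set G) * {g₁}, ∫ g in (F' : Set G) * {g₂},
          j (τ (g * h) a * τ g b * τ h c) ∂Measure.count ∂Measure.count =
      finsetAvg F fun h ↦ finsetAvg F' fun g ↦
        j (τ (g * g₂ * (h * g₁)) a * τ (g * g₂) b * τ (h * g₁) c) := by
  have horbit := S.isConstantOnAtoms_orbit hτ_meas
  refine inv_count_mul_count_smul_setIntegral_setIntegral hF hF' g₁ g₂
    (f := fun h g ↦ j (τ (g * h) a * τ g b * τ h c)) (fun h ↦ ?_) fun g ↦ ?_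
  · exact S.isConstantOnAtoms_map_mul (S.isConstantOnAtoms_map_mul
      ((horbit a).comp (measurable_mul_const h)) (horbit b)) fun _ _ _ ↦ rfl
  · exact S.isConstantOnAtoms_map_mul (S.isConstantOnAtoms_map_mul
      ((horbit a).comp (measurable_const_mul g)) fun _ _ _ ↦ rfl) (horbit c)

end IsTracialGNS

end Measurability

theorem cor_5_4_2_general {A G H ι κ : Type*} [CStarAlgebra A] [CommGroup G] [Countable G]
    [MeasurableSpace G] [MeasurableMul G] [NormedAddCommGroup H] [InnerProductSpace ℂ H]
    [CompleteSpace H] {ω : A →ₗ[ℂ] ℂ} {τ : G → A ≃⋆ₐ[ℂ] A} {j : A →ₗ[ℂ] H} {U : G → H →L[ℂ] H}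
    (S : IsTracialGNS ω τ j U) (hτ_meas : ∀ a b : A, Measurable fun g ↦ ω (a * τ g b))
    {l₀ : Filter κ} [l₀.NeBot] {Λ₀ : κ → Set G} (hΛ₀ : IsFoelner G Measure.count l₀ Λ₀)
    (hErg : ∀ a b : A, Tendsto (fun i ↦
      (Measure.count (Λ₀ i)).toReal⁻¹ • ∫ g in Λ₀ i, ω (a * τ g b) ∂Measure.count) l₀
      (𝓝 (ω a * ω b)))
    {l : Filter ι} [l.NeBot] {Λ₁ Λ₂ : ι → Set G} (hΛ₁ : IsFoelner G Measure.count l Λ₁)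
    (hΛ₂ : IsFoelner G Measure.count l Λ₂) {a b c : A}
    (hflight : j a ∈ flightVectors U ∨ j b ∈ flightVectors U ∨ j (star c) ∈ flightVectors U ∧
      Measurable (fun g ↦ ‖b * τ g c - τ g c * b‖) ∧ ∀ ε > (0 : ℝ), ∀ᶠ i in l, ∀ h,
        (Measure.count (Λ₁ i)).toReal⁻¹ *
          ∫ g in Λ₁ i * {h}, ‖b * τ g c - τ g c * b‖ ∂Measure.count ≤ ε)
    {ε : ℝ} (hε : 0 < ε) :
    ∀ᶠ i in l, ∀ g₁ g₂, ‖((Measure.count (Λ₁ i)).toReal * (Measure.count (Λ₂ i)).toReal)⁻¹ •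
      ∫ h in Λ₁ i * {g₁}, ∫ g in Λ₂ i * {g₂},
        j (τ (g * h) a * τ g b * τ h c) ∂Measure.count ∂Measure.count‖ ≤ ε := by
  obtain ⟨F₀, hF₀, hF₀_eq⟩ := exists_isFinsetFoelner_of_isFoelner_count hΛ₀
  obtain ⟨F₁, hF₁, hF₁_eq⟩ := exists_isFinsetFoelner_of_isFoelner_count hΛ₁
  obtain ⟨F₂, hF₂, hF₂_eq⟩ := exists_isFinsetFoelner_of_isFoelner_count hΛ₂
  have hErg_F₀ (a b : A) : Tendsto (fun i ↦ finsetAvg (F₀ i) fun g ↦ ω (a * τ g b)) l₀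
      (𝓝 (ω a * ω b)) := by
    refine (hErg a b).congr' (hF₀_eq.mono fun i ⟨hcoe, hmeas⟩ ↦ ?_)
    simpa only [hcoe, Set.singleton_one, mul_one] using inv_count_smul_setIntegral_mul_singleton
      hmeas 1 (isConstantOnAtoms_of_measurable (hτ_meas a b))
  have hbound : ∀ᶠ i in l, ∀ g₁ g₂, ‖finsetAvg (F₁ i) fun h ↦ finsetAvg (F₂ i) fun g ↦
      j (τ (g * g₂ * (h * g₁)) a * τ (g * g₂) b * τ (h * g₁) c)‖ ≤ ε := by
    rcases hflight with ha | hb | ⟨hc, hcomm_meas, hcomm⟩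
    · exact S.eventually_forall_norm_finsetAvg_finsetAvg_le
        (S.tendsto_finsetAvg_orbit hF₀ hErg_F₀ hF₁) hF₂ (.inl ha) c hε
    · exact S.eventually_forall_norm_finsetAvg_finsetAvg_le
        (S.tendsto_finsetAvg_orbit hF₀ hErg_F₀ hF₁) hF₂ (.inr (.inl hb)) c hε
    · refine S.eventually_forall_norm_finsetAvg_finsetAvg_le_of_commutator hF₁
        (S.tendsto_finsetAvg_orbit hF₀ hErg_F₀ hF₂) a hc (fun δ hδ ↦ ?_) hε
      filter_upwards [hcomm δ hδ, hF₁_eq] with i hi ⟨hcoe, hmeas⟩ g₁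
      rw [← inv_count_smul_setIntegral_mul_singleton hmeas g₁
        (isConstantOnAtoms_of_measurable hcomm_meas), hcoe]
      exact hi g₁
  filter_upwards [hbound, hF₁_eq, hF₂_eq] with i hi ⟨hcoe₁, hmeas₁⟩ ⟨hcoe₂, hmeas₂⟩ g₁ g₂
  rw [← hcoe₁, ← hcoe₂, S.inv_count_mul_count_smul_setIntegral_orbit hτ_meas hmeas₁ hmeas₂]
  exact hi g₁ g₂

/-- **Corollary 5.4(2)** (counting measure case). -/
theorem cor_5_4_2
    -- a unital C*-algebra A
    {A : Type*} [NormedRing A] [StarRing A] [CStarRing A] [NormedAlgebra ℂ A]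
    [CompleteSpace A] [StarModule ℂ A]
    -- a tracial state ω on A
    (ω : A →ₗ[ℂ] ℂ) (hω_pos : ∀ a : A, 0 ≤ ω (star a * a)) (hω_one : ω 1 = 1)
    (hω_tracial : ∀ a b : A, ω (a * b) = ω (b * a))
    -- a countable second countable topological abelian group G with the counting measure
    -- on its Borel σ-algebra
    {G : Type*} [CommGroup G] [Countable G] [TopologicalSpace G] [IsTopologicalGroup G]
    [SecondCountableTopology G] [MeasurableSpace G] [BorelSpace G]
    -- the action τ, making (A, ω, τ, G) a C*-dynamical system
    (τ : G → A ≃⋆ₐ[ℂ] A)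
    (hτ_one : ∀ a : A, τ 1 a = a)
    (hτ_mul : ∀ g h a, τ g (τ h a) = τ (g * h) a)
    (hω_inv : ∀ g a, ω (τ g a) = ω a)
    (hτ_meas : ∀ a b : A, Measurable fun g : G => ω (a * τ g b))
    -- the system is ergodic (w.r.t. some, equivalently every, Følner sequence in G)
    (hErg : ∃ Λ : ℕ → Set G, (∀ n, MeasurableSet (Λ n)) ∧
      (∀ᶠ n in atTop, 0 < Measure.count (Λ n) ∧ Measure.count (Λ n) < ⊤) ∧
      (∀ g : G, Tendsto
        (fun n => (Measure.count (symmDiff (Λ n) (Λ n * {g}))).toReal / (Measure.count (Λ n)).toReal)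
        atTop (𝓝 0)) ∧
      ∀ a b : A, Tendsto
        (fun n => (Measure.count (Λ n)).toReal⁻¹ • ∫ g in Λ n, ω (a * τ g b) ∂Measure.count)
        atTop (𝓝 (ω a * ω b)))
    -- (g,h,j,k) ↦ ω(τ_h(a₁) τ_g(a₂) τ_{gh}(a₃) τ_{jk}(a₄) τ_j(a₅) τ_k(a₆)) is
    -- Σ² × Σ²-measurable
    (hmeas6 : ∀ a₁ a₂ a₃ a₄ a₅ a₆ : A, Measurable fun q : (G × G) × (G × G) =>
      ω (τ q.1.2 a₁ * τ q.1.1 a₂ * τ (q.1.1 * q.1.2) a₃ *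
        τ (q.2.1 * q.2.2) a₄ * τ q.2.1 a₅ * τ q.2.2 a₆))
    -- a uniform Følner sequence (Λ1 n) in G ...
    (Λ1 : ℕ → Set G)
    (hΛ1meas : ∀ n, MeasurableSet (Λ1 n))
    (hΛ1fin : ∀ᶠ n in atTop, 0 < Measure.count (Λ1 n) ∧ Measure.count (Λ1 n) < ⊤)
    (hΛ1folner : ∀ g : G, Tendsto
      (fun n => (Measure.count (symmDiff (Λ1 n) (Λ1 n * {g}))).toReal / (Measure.count (Λ1 n)).toReal)
      atTop (𝓝 0))
    (hΛ1unif : ∀ᶠ m in atTop, ∀ ε > (0 : ℝ), ∀ᶠ n in atTop, ∀ g ∈ Λ1 m,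
      (Measure.count (symmDiff (Λ1 n) (Λ1 n * {g}))).toReal ≤ ε * (Measure.count (Λ1 n)).toReal)
    -- ... satisfying the Tempel'man condition ...
    (hΛ1temp : ∃ c : ℝ, 0 < c ∧ ∀ᶠ n in atTop, MeasurableSet ((Λ1 n)⁻¹ * Λ1 n) ∧
      Measure.count ((Λ1 n)⁻¹ * Λ1 n) ≤ ENNReal.ofReal c * Measure.count (Λ1 n))
    -- ... and such that (Λ1 n⁻¹ Λ1 n) is also Følner in G
    (hΛ1invfin : ∀ᶠ n in atTop, 0 < Measure.count ((Λ1 n)⁻¹ * Λ1 n) ∧ Measure.count ((Λ1 n)⁻¹ * Λ1 n) < ⊤)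
    (hΛ1invfolner : ∀ g : G, Tendsto
      (fun n => (Measure.count (symmDiff ((Λ1 n)⁻¹ * Λ1 n) (((Λ1 n)⁻¹ * Λ1 n) * {g}))).toReal /
        (Measure.count ((Λ1 n)⁻¹ * Λ1 n)).toReal)
      atTop (𝓝 0))
    -- a uniform Følner sequence (Λ2 n) in G ...
    (Λ2 : ℕ → Set G)
    (hΛ2meas : ∀ n, MeasurableSet (Λ2 n))
    (hΛ2fin : ∀ᶠ n in atTop, 0 < Measure.count (Λ2 n) ∧ Measure.count (Λ2 n) < ⊤)
    (hΛ2folner : ∀ g : G, Tendsto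
      (fun n => (Measure.count (symmDiff (Λ2 n) (Λ2 n * {g}))).toReal / (Measure.count (Λ2 n)).toReal)
      atTop (𝓝 0))
    (hΛ2unif : ∀ᶠ m in atTop, ∀ ε > (0 : ℝ), ∀ᶠ n in atTop, ∀ g ∈ Λ2 m,
      (Measure.count (symmDiff (Λ2 n) (Λ2 n * {g}))).toReal ≤ ε * (Measure.count (Λ2 n)).toReal)
    -- ... satisfying the Tempel'man condition ...
    (hΛ2temp : ∃ c : ℝ, 0 < c ∧ ∀ᶠ n in atTop, MeasurableSet ((Λ2 n)⁻¹ * Λ2 n) ∧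
      Measure.count ((Λ2 n)⁻¹ * Λ2 n) ≤ ENNReal.ofReal c * Measure.count (Λ2 n))
    -- ... and such that (Λ2 n⁻¹ Λ2 n) is also Følner in G
    (hΛ2invfin : ∀ᶠ n in atTop, 0 < Measure.count ((Λ2 n)⁻¹ * Λ2 n) ∧ Measure.count ((Λ2 n)⁻¹ * Λ2 n) < ⊤)
    (hΛ2invfolner : ∀ g : G, Tendsto
      (fun n => (Measure.count (symmDiff ((Λ2 n)⁻¹ * Λ2 n) (((Λ2 n)⁻¹ * Λ2 n) * {g}))).toReal /
        (Measure.count ((Λ2 n)⁻¹ * Λ2 n)).toReal)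
      atTop (𝓝 0))
    -- a GNS representation (H, j) of (A, ω)
    {H : Type*} [NormedAddCommGroup H] [InnerProductSpace ℂ H] [CompleteSpace H]
    (j : A →ₗ[ℂ] H) (hj_dense : DenseRange j)
    (hj_inner : ∀ a b : A, (inner ℂ (j a) (j b) : ℂ) = ω (star a * b))
    (U : G → H →L[ℂ] H) (hU : ∀ g a, U g (j a) = j (τ g a)) (hU_contr : ∀ g, ‖U g‖ ≤ 1)
    -- a, b, c ∈ A with at least one of ι(a), ι(b), ι(c*) a flight vector
    (a b c : A)
    (hflight : j a ∈ flightVectors U ∨ j b ∈ flightVectors U ∨ j (star c) ∈ flightVectors U)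
    -- the system is uniformly asymptotically abelian with respect to (Λ1 n) (ε-form)
    (hcomm_meas : ∀ a b : A, Measurable fun g : G => ‖a * τ g b - τ g b * a‖)
    (hUAA : ∀ a b : A, ∀ ε > (0 : ℝ), ∀ᶠ n in atTop, ∀ h : G,
      (Measure.count (Λ1 n)).toReal⁻¹ * ∫ g in Λ1 n * {h}, ‖a * τ g b - τ g b * a‖ ∂Measure.count ≤ ε)
 :
    -- conclusion (in ε-form)
    ∀ ε > (0 : ℝ), ∀ᶠ n in atTop, ∀ g₁ g₂ : G,
      ‖((Measure.count (Λ1 n)).toReal * (Measure.count (Λ2 n)).toReal)⁻¹ •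
          ∫ h in Λ1 n * {g₁}, ∫ g in Λ2 n * {g₂},
            j (τ (g * h) a * τ g b * τ h c) ∂Measure.count ∂Measure.count‖ ≤ ε := by
  let _ : CStarAlgebra A := {}
  have S : IsTracialGNS ω τ j U :=
    ⟨hω_one, hω_tracial, hτ_one, hτ_mul, hω_inv, hj_dense, hj_inner, hU⟩
  obtain ⟨Λ₀, hΛ₀meas, hΛ₀fin, hΛ₀folner, hErg⟩ := hErg
  exact fun ε hε ↦ cor_5_4_2_general S hτ_meas
    (isFoelner_count_of_tendsto_toReal hΛ₀meas hΛ₀fin hΛ₀folner) hErg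
    (isFoelner_count_of_tendsto_toReal hΛ1meas hΛ1fin hΛ1folner)
    (isFoelner_count_of_tendsto_toReal hΛ2meas hΛ2fin hΛ2folner)
    (hflight.imp_right (Or.imp_right fun hc ↦ ⟨hc, hcomm_meas b c, hUAA b c⟩)) hε
end

section
/- Let (A,ω,τ,G) be a weakly mixing C*-dynamical system with ω tracial, where G is a countable second countable topological group, Σ its Borel σ-algebra, μ the counting measure, and (g,h,j,k) ↦ ω(τ_h(a₁) τ_g(a₂) τ_{gh}(a₃) τ_{jk}(a₄) τ_j(a₅) τ_k(a₆)) is Σ² × Σ²-measurable for all a₁,...,a₆ ∈ A. Assume there exist uniform Følner sequences (Λ_{1,n}) and (Λ_{2,n}) in G satisfying the Tempel'man condition and such that (Λ_{1,n}⁻¹Λ_{1,n}) and (Λ_{2,n}⁻¹Λ_{2,n}) are also Følner in G, and that (A,ω,τ,G) is uniformly asymptotically abelian with respect to (Λ_{1,n}). Then, in any GNS representation, for all a, b, c ∈ A: lim_{n→∞} sup_{g₁,g₂ ∈ G} ‖ (1/(μ(Λ_{1,n})μ(Λ_{2,n}))) Σ_{h ∈ Λ_{1,n}g₁} Σ_{g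 ∈ Λ_{2,n}g₂} ι(τ_{gh}(a) τ_g(b) τ_h(c)) − ω(a)ω(b)ω(c) Ω ‖ = 0. -/
open MeasureTheory Filter Topology
open scoped Pointwise ComplexOrder

/-!
Van der Corput's argument: averages of bounded vectors `v x` tend to zero as soon as there are
arbitrarily many permutations `σ k`, asymptotically preserving the averaging sets, for which the
families `v (σ k x)` are pairwise almost orthogonal on average. Weak mixing provides such
permutations, namely translations by elements `s k` for which the `τ (s k) b`, where `ω b = 0`,
are pairwise almost orthogonal.

Write `a = (a - ω a) + ω a`, then `b = (b - ω b) + ω b`. If `ω a = 0`, shift `h` in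
`τ (g * h) a * τ g b * τ h c`. Traciality brings the inner product of two shifts into the form
`ω (τ h C * τ g (star b * τ h D * b))`, where `ω D` is small, and asymptotic abelianness along `h`
allows one to replace `star b * τ h D * b` by `star b * b * τ h D`. The average of
`ω (τ h C * τ g (B * τ h D))` tends to `ω C * ω B * ω D` by a second van der Corput argument, in
the variable `g`. The case `ω b = 0` of `τ g b * τ h c` is similar, and the remaining average of
`τ h c` is the mean ergodic theorem.

Uniformity in `g₁` and `g₂` comes for free: all of this works along nets, in particular along the
net of all pairs of translates of the two Følner sequences. Singletons of `G` need not be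
measurable, but measurable functions do not distinguish inseparable points, so integrals over
finite sets with respect to the counting measure are still finite sums.
-/

namespace WeakMixingAverage

open scoped Finset

variable {A E E' G H ι ι' X Y : Type*}

section Average

/-- The average of `f` over the finite set `F`, which is `0` when `F` is empty. Unlike
`Finset.expect` it is formed with real scalars, and unlike `MeasureTheory.average` it needs no
measurability. -/
noncomputable def avg [AddCommGroup E] [Module ℝ E] (F : Finset X) (f : X → E) : E :=
  (#F : ℝ)⁻¹ • ∑ x ∈ F, f x

section Module

variable [AddCommGroup E] [Module ℝ E] [AddCommGroup E'] [Module ℝ E']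

lemma avg_add (F : Finset X) (f g : X → E) :
    avg F (fun x => f x + g x) = avg F f + avg F g := by
  simp only [avg, Finset.sum_add_distrib, smul_add]

lemma avg_sub (F : Finset X) (f g : X → E) :
    avg F (fun x => f x - g x) = avg F f - avg F g := by
  simp only [avg, Finset.sum_sub_distrib, smul_sub]

lemma avg_map (L : E →ₗ[ℝ] E') (F : Finset X) (f : X → E) :
    avg F (fun x => L (f x)) = L (avg F f) := by
  simp only [avg, map_smul, map_sum]

lemma avg_smul {𝕜 : Type*} [Monoid 𝕜] [DistribMulAction 𝕜 E] [SMulCommClass ℝ 𝕜 E] (z : 𝕜)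
    (F : Finset X) (f : X → E) : avg F (fun x => z • f x) = z • avg F f := by
  simp only [avg, ← Finset.smul_sum, smul_comm]

lemma avg_const {F : Finset X} (hF : F.Nonempty) (e : E) : avg F (fun _ => e) = e := by
  have hcard : (F.card : ℝ) ≠ 0 := Nat.cast_ne_zero.2 hF.card_pos.ne'
  rw [avg, Finset.sum_const, ← Nat.cast_smul_eq_nsmul ℝ, inv_smul_smul₀ hcard]

lemma avg_product (F : Finset X) (K : Finset Y) (f : X → Y → E) :
    avg (F ×ˢ K) (fun p => f p.1 p.2) = avg F fun x => avg K (f x) := by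
  simp only [avg, ← Finset.smul_sum, smul_smul, Finset.sum_product, Finset.card_product,
    Nat.cast_mul, mul_inv]

lemma avg_product_fst (F : Finset X) {K : Finset Y} (hK : K.Nonempty) (f : X → E) :
    avg (F ×ˢ K) (fun p => f p.1) = avg F f := by
  simp only [avg_product F K fun x _ => f x, avg_const hK]

lemma avg_product_snd {F : Finset X} (hF : F.Nonempty) (K : Finset Y) (f : Y → E) :
    avg (F ×ˢ K) (fun p => f p.2) = avg K f := by
  simp only [avg_product F K fun _ y => f y, avg_const hF]

lemma avg_comm (F : Finset X) (K : Finset Y) (f : X → Y → E) :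
    (avg F fun x => avg K (f x)) = avg K fun y => avg F fun x => f x y := by
  simp only [avg, ← Finset.smul_sum]
  rw [Finset.sum_comm, smul_comm]

end Module

lemma norm_avg_le_avg_norm [NormedAddCommGroup E] [NormedSpace ℝ E] (F : Finset X) (f : X → E) :
    ‖avg F f‖ ≤ avg F fun x => ‖f x‖ := by
  simp only [avg, norm_smul, smul_eq_mul, norm_inv, Real.norm_natCast]
  gcongr
  exact norm_sum_le _ _

lemma avg_nonneg (F : Finset X) {f : X → ℝ} (h : ∀ x, 0 ≤ f x) : 0 ≤ avg F f :=
  smul_nonneg (by positivity) (Finset.sum_nonneg fun x _ => h x)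

lemma avg_mono (F : Finset X) {f g : X → ℝ} (h : ∀ x ∈ F, f x ≤ g x) : avg F f ≤ avg F g := by
  simp only [avg, smul_eq_mul]
  gcongr with x hx
  exact h x hx

lemma avg_le (F : Finset X) {f : X → ℝ} {M : ℝ} (hM : 0 ≤ M) (h : ∀ x ∈ F, f x ≤ M) :
    avg F f ≤ M := by
  rcases F.eq_empty_or_nonempty with rfl | hF
  · simpa [avg] using hM
  · exact (avg_mono F h).trans (avg_const hF M).le

lemma sq_avg_le_avg_sq (F : Finset X) (f : X → ℝ) : (avg F f) ^ 2 ≤ avg F fun x => f x ^ 2 := by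
  simpa only [avg, smul_eq_mul, inv_mul_eq_div] using sum_div_card_sq_le_sum_sq_div_card

end Average

section AsymptoticInvariance

variable {l : Filter ι}

open Classical in
/-- The finite sets `Φ i` are asymptotically invariant under the permutation `σ`: the proportion
of points of `Φ i` which `σ` moves out of `Φ i` tends to `0`. For a permutation this is equivalent
to the symmetric difference of `Φ i` and `σ (Φ i)` being negligible. -/
def IsAsympInvariant (l : Filter ι) (Φ : ι → Finset X) (σ : Equiv.Perm X) : Prop :=
  Tendsto (fun i => (#{x ∈ Φ i | σ x ∉ Φ i} : ℝ) / #(Φ i)) l (𝓝 0)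

open Classical in
lemma norm_sum_sub_sum_comp_le [SeminormedAddCommGroup E] (F : Finset X) (σ : Equiv.Perm X)
    {f : X → E} {M : ℝ} (hf : ∀ x, ‖f x‖ ≤ M) :
    ‖∑ x ∈ F, f x - ∑ x ∈ F, f (σ x)‖ ≤ 2 * M * #{x ∈ F | σ x ∉ F} := by
  have hout : #(F.map σ.toEmbedding \ F) = #{x ∈ F | σ x ∉ F} := by
    rw [← Finset.card_map σ.toEmbedding (s := {x ∈ F | σ x ∉ F})]
    congr 1
    ext x
    obtain ⟨y, rfl⟩ := σ.surjective x
    simp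
  have hin : #(F \ F.map σ.toEmbedding) = #{x ∈ F | σ x ∉ F} := by
    rw [← hout, Finset.card_sdiff_comm (Finset.card_map _).symm]
  have hbound (S : Finset X) : ‖∑ x ∈ S, f x‖ ≤ #S * M := by
    simpa using norm_sum_le_of_le S fun x _ => hf x
  calc ‖∑ x ∈ F, f x - ∑ x ∈ F, f (σ x)‖
      = ‖∑ x ∈ F \ F.map σ.toEmbedding, f x - ∑ x ∈ F.map σ.toEmbedding \ F, f x‖ := by
        rw [Finset.sum_sdiff_sub_sum_sdiff, Finset.sum_map]; rfl
    _ ≤ #{x ∈ F | σ x ∉ F} * M + #{x ∈ F | σ x ∉ F} * M :=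
        (norm_sub_le _ _).trans (add_le_add (hin ▸ hbound _) (hout ▸ hbound _))
    _ = 2 * M * #{x ∈ F | σ x ∉ F} := by ring

namespace IsAsympInvariant

variable {Φ : ι → Finset X} {σ : Equiv.Perm X}

lemma tendsto_avg_sub_avg_comp [SeminormedAddCommGroup E] [NormedSpace ℝ E]
    (h : IsAsympInvariant l Φ σ) {f : X → E} {M : ℝ} (hf : ∀ x, ‖f x‖ ≤ M) :
    Tendsto (fun i => avg (Φ i) f - avg (Φ i) fun x => f (σ x)) l (𝓝 0) := by
  refine squeeze_zero_norm (fun i => ?_) (by simpa using Tendsto.const_mul (2 * M) h)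
  rw [avg, avg, ← smul_sub, norm_smul, norm_inv, Real.norm_natCast, inv_mul_eq_div, ← mul_div_assoc]
  gcongr
  exact norm_sum_sub_sum_comp_le _ σ hf

lemma prod_right (h : IsAsympInvariant l Φ σ) (K : ι → Finset Y) :
    IsAsympInvariant l (fun i => Φ i ×ˢ K i) (σ.prodCongr (Equiv.refl Y)) := by
  classical
  refine squeeze_zero (fun i => by positivity) (fun i => ?_) h
  have hfilter : {p ∈ Φ i ×ˢ K i | σ.prodCongr (Equiv.refl Y) p ∉ Φ i ×ˢ K i} =
      {x ∈ Φ i | σ x ∉ Φ i} ×ˢ K i := by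
    ext ⟨x, y⟩
    simp only [Finset.mem_filter, Finset.mem_product, Equiv.prodCongr_apply, Prod.map,
      Equiv.refl_apply]
    tauto
  simp only [hfilter, Finset.card_product, Nat.cast_mul]
  exact mul_div_mul_right_le (by positivity)

lemma prod_left (h : IsAsympInvariant l Φ σ) (K : ι → Finset Y) :
    IsAsympInvariant l (fun i => K i ×ˢ Φ i) ((Equiv.refl Y).prodCongr σ) := by
  classical
  refine squeeze_zero (fun i => by positivity) (fun i => ?_) h
  have hfilter : {p ∈ K i ×ˢ Φ i | (Equiv.refl Y).prodCongr σ p ∉ K i ×ˢ Φ i} =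
      K i ×ˢ {x ∈ Φ i | σ x ∉ Φ i} := by
    ext ⟨y, x⟩
    simp only [Finset.mem_filter, Finset.mem_product, Equiv.prodCongr_apply, Prod.map,
      Equiv.refl_apply]
    tauto
  simp only [hfilter, Finset.card_product, Nat.cast_mul]
  exact mul_div_mul_left_le (by positivity)

lemma map_comp {l' : Filter ι'} (h : IsAsympInvariant l Φ σ) {φ : ι' → ι}
    (hφ : Tendsto φ l' l) {e : ι' → Equiv.Perm X} (he : ∀ i, Commute (e i) σ) :
    IsAsympInvariant l' (fun i => (Φ (φ i)).map (e i).toEmbedding) σ := by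
  classical
  refine (h.comp hφ).congr fun i => ?_
  have hσ (x : X) : σ (e i x) = e i (σ x) := (Equiv.ext_iff.1 (he i) x).symm
  simp only [Function.comp, Finset.filter_map, Finset.card_map, Equiv.coe_toEmbedding, hσ,
    Finset.mem_map_equiv, Equiv.symm_apply_apply]

end IsAsympInvariant

end AsymptoticInvariance

section VanDerCorput

section Real

variable [NormedAddCommGroup H] [InnerProductSpace ℝ H]

lemma norm_sq_avg_eq_avg_avg_inner (F : Finset X) (v : X → H) :
    ‖avg F v‖ ^ 2 = avg F fun x => avg F fun y => inner ℝ (v x) (v y) := by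
  simp only [avg, ← real_inner_self_eq_norm_sq, inner_smul_left, inner_smul_right, sum_inner,
    inner_sum, Finset.mul_sum, smul_eq_mul, conj_trivial]
  exact Finset.sum_comm

lemma avg_avg_le_of_pairwise (F : Finset X) {c : X → X → ℝ} {K δ : ℝ} (hK : 0 ≤ K) (hδ : 0 ≤ δ)
    (hdiag : ∀ x, c x x ≤ K) (hoff : (F : Set X).Pairwise fun x y => c x y ≤ δ) :
    (avg F fun x => avg F (c x)) ≤ K / #F + δ := by
  classical
  refine avg_le F (by positivity) fun x hx => ?_
  have hle : ∀ y ∈ F, c x y ≤ (if x = y then K else 0) + δ := fun y hy => by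
    split_ifs with hxy
    · subst hxy; linarith [hdiag x]
    · linarith [hoff hx hy hxy]
  calc avg F (c x) ≤ avg F fun y => (if x = y then K else 0) + δ := avg_mono F hle
    _ = K / #F + δ := by
      rw [avg_add, avg_const ⟨x, hx⟩]
      simp [avg, hx, inv_mul_eq_div]

lemma avg_norm_sq_avg_le (Φ : Finset X) (F : Finset Y) {w : Y → X → H} {M δ : ℝ} (hδ : 0 ≤ δ)
    (hw : ∀ k x, ‖w k x‖ ≤ M)
    (hoff : (F : Set Y).Pairwise fun k m => avg Φ (fun x => inner ℝ (w k x) (w m x)) ≤ δ) :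
    (avg Φ fun x => ‖avg F fun k => w k x‖ ^ 2) ≤ M ^ 2 / #F + δ := by
  simp only [norm_sq_avg_eq_avg_avg_inner]
  rw [avg_comm]
  simp only [fun k => avg_comm Φ F fun x m => (inner ℝ (w k x) (w m x) : ℝ)]
  refine avg_avg_le_of_pairwise F (by positivity) hδ (fun k => ?_) hoff
  refine avg_le Φ (by positivity) fun x _ => ?_
  rw [real_inner_self_eq_norm_sq]
  gcongr
  exact hw k x

lemma norm_avg_apply_avg_le [NormedAddCommGroup E] [NormedSpace ℝ E]
    (Φ : Finset X) (F : Finset Y) {w : Y → X → H} {T : X → H →L[ℝ] E} {C δ : ℝ} (hC : 0 ≤ C)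
    (hT : ∀ x, ‖T x‖ ≤ C) (hw : (avg Φ fun x => ‖avg F fun k => w k x‖ ^ 2) ≤ δ) :
    ‖avg Φ fun x => T x (avg F fun k => w k x)‖ ≤ C * √δ := by
  calc ‖avg Φ fun x => T x (avg F fun k => w k x)‖
      ≤ avg Φ fun x => C * ‖avg F fun k => w k x‖ :=
        (norm_avg_le_avg_norm _ _).trans (avg_mono _ fun x _ => (T x).le_of_opNorm_le (hT x) _)
    _ = C * avg Φ fun x => ‖avg F fun k => w k x‖ := avg_map (LinearMap.mulLeft ℝ C) _ _
    _ ≤ C * √δ := by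
        gcongr
        exact Real.le_sqrt_of_sq_le ((sq_avg_le_avg_sq _ _).trans hw)

lemma tendsto_avg_sub_avg_avg_comp [NormedAddCommGroup E] [NormedSpace ℝ E] {l : Filter ι}
    {Φ : ι → Finset X} {F : Finset Y} (hF : F.Nonempty) {σ : Y → Equiv.Perm X}
    (hσ : ∀ k, IsAsympInvariant l Φ (σ k)) {f : X → E} {M : ℝ} (hf : ∀ x, ‖f x‖ ≤ M) :
    Tendsto (fun i => avg (Φ i) f - avg (Φ i) fun x => avg F fun k => f (σ k x)) l (𝓝 0) := by
  have hsum := (tendsto_finsetSum F fun k _ =>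
    (hσ k).tendsto_avg_sub_avg_comp hf).const_smul ((#F : ℝ)⁻¹)
  rw [Finset.sum_const_zero, smul_zero] at hsum
  refine hsum.congr fun i => ?_
  rw [avg_comm, ← avg_const hF (avg (Φ i) f), ← avg_sub, avg_const hF]
  rfl

lemma exists_finset_eventually_avg_norm_sq_avg_le {l : Filter ι} {Φ : ι → Finset X}
    {w : ℕ → X → H} {M δ : ℝ} (hδ : 0 < δ) (hw : ∀ k x, ‖w k x‖ ≤ M)
    (hpair : Pairwise fun k m => ∀ᶠ i in l, avg (Φ i) (fun x => inner ℝ (w k x) (w m x)) ≤ δ) :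
    ∃ F : Finset ℕ, F.Nonempty ∧
      ∀ᶠ i in l, (avg (Φ i) fun x => ‖avg F fun k => w k x‖ ^ 2) ≤ δ + δ := by
  obtain ⟨N, hN⟩ := exists_nat_ge (M ^ 2 / δ)
  let F := Finset.range (N + 1)
  have hF : M ^ 2 / #F ≤ δ := by
    rw [Finset.card_range, div_le_comm₀ (by positivity) hδ]
    exact hN.trans (Nat.cast_le.2 N.le_succ)
  have hoff : ∀ᶠ i in l, (F : Set ℕ).Pairwise fun k m =>
      avg (Φ i) (fun x => inner ℝ (w k x) (w m x)) ≤ δ := by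
    simp only [Set.Pairwise]
    exact (Filter.eventually_all_finset F).2 fun k _ =>
      (Filter.eventually_all_finset F).2 fun m _ =>
        eventually_imp_distrib_left.2 fun hkm => hpair hkm
  refine ⟨F, Finset.nonempty_range_add_one, hoff.mono fun i hi => ?_⟩
  exact (avg_norm_sq_avg_le (Φ i) F hδ.le hw hi).trans (by gcongr)

/-- Averaging over finitely many of the `σ k` hardly changes the average over `Φ i`, while almost
orthogonality of the families `v (σ k x)` makes the vectors averaged over `k` short for most
`x`. -/
theorem tendsto_avg_apply_zero_of_inner_shift_le [NormedAddCommGroup E] [NormedSpace ℝ E]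
    {l : Filter ι} {Φ : ι → Finset X} {v : X → H} {T : X → H →L[ℝ] E} {M C : ℝ}
    (hv : ∀ x, ‖v x‖ ≤ M) (hT : ∀ x, ‖T x‖ ≤ C)
    (hshift : ∀ δ > 0, ∃ σ : ℕ → Equiv.Perm X,
      (∀ k, IsAsympInvariant l Φ (σ k)) ∧ (∀ k x, T (σ k x) = T x) ∧
      Pairwise fun k m => ∀ᶠ i in l,
        avg (Φ i) (fun x => inner ℝ (v (σ k x)) (v (σ m x))) ≤ δ) :
    Tendsto (fun i => avg (Φ i) fun x => T x (v x)) l (𝓝 0) := by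
  rcases isEmpty_or_nonempty X with hX | ⟨⟨x₀⟩⟩
  · simp only [avg, Finset.eq_empty_of_isEmpty, Finset.sum_empty, smul_zero, tendsto_const_nhds]
  have hC : 0 ≤ C := (norm_nonneg _).trans (hT x₀)
  refine NormedAddGroup.tendsto_nhds_zero.2 fun ε hε => ?_
  obtain ⟨δ, hδC, hδ⟩ : ∃ δ, C * √(δ + δ) < ε / 2 ∧ 0 < δ := by
    have hlim : Tendsto (fun δ : ℝ => C * √(δ + δ)) (𝓝[>] 0) (𝓝 0) :=
      ((by fun_prop : Continuous fun δ : ℝ => C * √(δ + δ)).tendsto' 0 0 (by simp)).mono_left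
        nhdsWithin_le_nhds
    exact ((hlim.eventually_lt_const (half_pos hε)).and self_mem_nhdsWithin).exists
  obtain ⟨σ, hσ, hTσ, hpair⟩ := hshift δ hδ
  obtain ⟨F, hF, hsq⟩ := exists_finset_eventually_avg_norm_sq_avg_le hδ
    (fun k x => hv (σ k x)) hpair
  have hTv : ∀ x, ‖T x (v x)‖ ≤ C * M := fun x => (T x).le_of_opNorm_le_of_le (hT x) (hv x)
  have hshifted := NormedAddGroup.tendsto_nhds_zero.1
    (tendsto_avg_sub_avg_avg_comp hF hσ hTv) (ε / 2) (half_pos hε)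
  have hT_avg (x : X) : T x (avg F fun k => v (σ k x)) =
      avg F fun k => T (σ k x) (v (σ k x)) := by
    simp only [hTσ]
    exact (avg_map (T x).toLinearMap F fun k => v (σ k x)).symm
  filter_upwards [hsq, hshifted] with i hi hclose
  have hsmall := norm_avg_apply_avg_le (Φ i) F hC hT hi
  simp only [hT_avg] at hsmall
  calc ‖avg (Φ i) fun x => T x (v x)‖
      ≤ _ + _ := norm_le_norm_sub_add _ _
    _ < ε / 2 + ε / 2 := add_lt_add hclose (hsmall.trans_lt hδC)
    _ = ε := add_halves ε

end Real

theorem tendsto_avg_apply_zero_of_inner_shift_tendsto [NormedAddCommGroup H]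
    [InnerProductSpace ℂ H] [NormedAddCommGroup E] [NormedSpace ℂ E]
    {l : Filter ι} {Φ : ι → Finset X} {v : X → H} {T : X → H →L[ℂ] E} {M C : ℝ}
    (hv : ∀ x, ‖v x‖ ≤ M) (hT : ∀ x, ‖T x‖ ≤ C)
    (hshift : ∀ δ > 0, ∃ σ : ℕ → Equiv.Perm X,
      (∀ k, IsAsympInvariant l Φ (σ k)) ∧ (∀ k x, T (σ k x) = T x) ∧
      Pairwise fun k m => ∃ z : ℂ, ‖z‖ < δ ∧
        Tendsto (fun i => avg (Φ i) fun x => inner ℂ (v (σ k x)) (v (σ m x))) l (𝓝 z)) :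
    Tendsto (fun i => avg (Φ i) fun x => T x (v x)) l (𝓝 0) := by
  let : InnerProductSpace ℝ H := InnerProductSpace.complexToReal
  refine tendsto_avg_apply_zero_of_inner_shift_le (T := fun x => (T x).restrictScalars ℝ) hv
    (fun x => (ContinuousLinearMap.norm_restrictScalars (T x)).trans_le (hT x)) fun δ hδ => ?_
  obtain ⟨σ, hσ, hTσ, hpair⟩ := hshift δ hδ
  refine ⟨σ, hσ, fun k x => congrArg _ (hTσ k x), fun k m hkm => ?_⟩
  obtain ⟨z, hz, hlim⟩ := hpair hkm
  filter_upwards [((Complex.continuous_re.tendsto z).comp hlim).eventually_le_const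
    ((Complex.re_le_norm z).trans_lt hz)] with i hi
  exact (avg_map Complex.reLm (Φ i) _).trans_le hi

theorem tendsto_avg_zero_of_inner_shift_tendsto [NormedAddCommGroup H] [InnerProductSpace ℂ H]
    {l : Filter ι} {Φ : ι → Finset X} {v : X → H} {M : ℝ} (hv : ∀ x, ‖v x‖ ≤ M)
    (hshift : ∀ δ > 0, ∃ σ : ℕ → Equiv.Perm X, (∀ k, IsAsympInvariant l Φ (σ k)) ∧
      Pairwise fun k m => ∃ z : ℂ, ‖z‖ < δ ∧
        Tendsto (fun i => avg (Φ i) fun x => inner ℂ (v (σ k x)) (v (σ m x))) l (𝓝 z)) :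
    Tendsto (fun i => avg (Φ i) v) l (𝓝 0) := by
  refine tendsto_avg_apply_zero_of_inner_shift_tendsto (T := fun _ => ContinuousLinearMap.id ℂ H)
    hv (fun _ => ContinuousLinearMap.norm_id_le) fun δ hδ => ?_
  obtain ⟨σ, hσ, hpair⟩ := hshift δ hδ
  exact ⟨σ, hσ, fun _ _ => rfl, hpair⟩

end VanDerCorput

section Folner

/-- A net `F` of finite subsets of `G`, indexed by `ι` along the filter `l`, which is Følner for
translations from the right. The filter is arbitrary so that families of Følner sequences, such as
all translates of one of them, can be treated uniformly in their parameter. -/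
structure IsFolnerNet [Group G] (l : Filter ι) (F : ι → Finset G) : Prop where
  nonempty : ∀ᶠ i in l, (F i).Nonempty
  asympInvariant : ∀ s, IsAsympInvariant l F (Equiv.mulRight s)

variable [CommGroup G] {l : Filter ι}

lemma IsFolnerNet.translate {F : ι → Finset G} (hF : IsFolnerNet l F) (t : Y → G) :
    IsFolnerNet (l ×ˢ ⊤) fun p => (F p.1).map (Equiv.mulRight (t p.2)).toEmbedding where
  nonempty := (hF.nonempty.prod_inl ⊤).mono fun _ hp => hp.map
  asympInvariant s := (hF.asympInvariant s).map_comp tendsto_fst fun p =>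
    Equiv.ext fun x => mul_right_comm x s (t p.2)

lemma isFoelner_of_tendsto_mul_singleton [MeasurableSpace G] [MeasurableMul G]
    {Λ : ι → Set G} (hmeas : ∀ᶠ i in l, MeasurableSet (Λ i))
    (hfin : ∀ᶠ i in l, 0 < Measure.count (Λ i) ∧ Measure.count (Λ i) < ⊤)
    (hlim : ∀ g, Tendsto (fun i => (Measure.count (symmDiff (Λ i) (Λ i * {g}))).toReal /
      (Measure.count (Λ i)).toReal) l (𝓝 0)) :
    IsFoelner G Measure.count l Λ where
  eventually_measurableSet := hmeas
  eventually_meas_ne_zero := hfin.mono fun _ hi => hi.1.ne'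
  eventually_meas_ne_top := hfin.mono fun _ hi => hi.2.ne
  tendsto_meas_smul_symmDiff g := by
    rw [← ENNReal.ofReal_zero]
    refine (ENNReal.tendsto_ofReal (hlim g)).congr' ?_
    filter_upwards [hmeas, hfin] with i hm hi
    have htrans : Λ i * {g} = g • Λ i := by rw [mul_comm, ← smul_eq_mul, Set.singleton_smul]
    have hΛ : (Λ i).Finite := (Measure.count_apply_lt_top' hm).1 hi.2
    have hdiff : Measure.count (symmDiff (g • Λ i) (Λ i)) < ⊤ :=
      (Measure.count_apply_lt_top' ((hm.const_smul g).symmDiff hm)).2 (hΛ.smul_set.symmDiff hΛ)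
    rw [htrans, symmDiff_comm, ENNReal.ofReal_div_of_pos (ENNReal.toReal_pos hi.1.ne' hi.2.ne),
      ENNReal.ofReal_toReal hdiff.ne, ENNReal.ofReal_toReal hi.2.ne]

lemma exists_isFolnerNet_of_isFoelner [MeasurableSpace G] {Λ : ι → Set G}
    (hΛ : IsFoelner G Measure.count l Λ) :
    ∃ F : ι → Finset G, IsFolnerNet l F ∧ ∀ᶠ i in l, (F i : Set G) = Λ i := by
  classical
  have hfin : ∀ᶠ i in l, ∃ S : Finset G, (S : Set G) = Λ i := by
    filter_upwards [hΛ.eventually_measurableSet, hΛ.eventually_meas_ne_top] with i hm hi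
    exact ((Measure.count_apply_lt_top' hm).1 hi.lt_top).exists_finset_coe
  let F (i : ι) : Finset G := Function.invFun (↑) (Λ i)
  have hF : ∀ᶠ i in l, (F i : Set G) = Λ i := hfin.mono fun i hi => Function.invFun_eq hi
  refine ⟨F, ⟨?_, fun s => ?_⟩, hF⟩
  · filter_upwards [hF, hΛ.eventually_meas_ne_zero] with i hi hne
    rw [← Finset.coe_nonempty, hi]
    exact Measure.count_ne_zero_iff.1 hne
  have hle : ∀ᶠ i in l, (#{x ∈ F i | Equiv.mulRight s x ∉ F i} / #(F i) : ENNReal) ≤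
      Measure.count (symmDiff (s⁻¹ • Λ i) (Λ i)) / Measure.count (Λ i) := by
    filter_upwards [hF, hΛ.eventually_measurableSet] with i hi hm
    rw [← hi] at hm ⊢
    rw [Measure.count_apply_finset' hm]
    gcongr
    refine le_trans ?_ ((ENNReal.tsum_set_one _).symm.trans_le Measure.le_count_apply)
    rw [← ENat.toENNReal_coe, ← Set.encard_coe_eq_coe_finsetCard]
    refine ENat.toENNReal_mono (Set.encard_le_encard fun x hx => ?_)
    rw [Finset.mem_coe, Finset.mem_filter] at hx
    refine Or.inr ⟨hx.1, fun hmem => hx.2 ?_⟩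
    simpa only [Equiv.coe_mulRight, smul_eq_mul, mul_comm s, Finset.mem_coe] using
      Set.mem_inv_smul_set_iff.1 hmem
  have hlim := tendsto_of_tendsto_of_tendsto_of_le_of_le' tendsto_const_nhds
    (hΛ.tendsto_meas_smul_symmDiff s⁻¹) (Eventually.of_forall fun _ => zero_le) hle
  refine ((ENNReal.tendsto_toReal ENNReal.zero_ne_top).comp hlim).congr fun i => ?_
  simp only [Function.comp, ENNReal.toReal_div, ENNReal.toReal_natCast]

end Folner

section System

variable [CStarAlgebra A] [NormedAddCommGroup H] [InnerProductSpace ℂ H]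
  {ω : A →ₗ[ℂ] ℂ} {τ : G → A ≃⋆ₐ[ℂ] A} {j : A →ₗ[ℂ] H}

/-- The linear functional `ω` is tracial. -/
def IsTracial (ω : A →ₗ[ℂ] ℂ) : Prop :=
  ∀ a b, ω (a * b) = ω (b * a)

/-- `j` is a GNS map of the unital functional `ω`, up to the density of its range. Positivity of `ω`
is contained in the formula for the inner product. -/
structure IsGNSMap (ω : A →ₗ[ℂ] ℂ) (j : A →ₗ[ℂ] H) : Prop where
  map_one : ω 1 = 1
  inner_eq : ∀ a b, inner ℂ (j a) (j b) = ω (star a * b)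

/-- `τ` is an action of `G` by automorphisms which preserve `ω`. If `G` is a group, then
`τ 1 = id` follows, since `τ 1` is idempotent and invertible. -/
structure IsInvariantAction [Mul G] (ω : A →ₗ[ℂ] ℂ) (τ : G → A ≃⋆ₐ[ℂ] A) : Prop where
  map_map : ∀ g h a, τ g (τ h a) = τ (g * h) a
  invariant : ∀ g a, ω (τ g a) = ω a

/-- Weak mixing of `τ` with respect to `ω`, in the form which does not refer to Følner sequences:
finitely many pairs can be made almost independent by one and the same `τ g`. -/
def IsWeaklyMixing (ω : A →ₗ[ℂ] ℂ) (τ : G → A ≃⋆ₐ[ℂ] A) : Prop :=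
  ∀ s : Finset (A × A), ∀ ε > 0, ∃ g, ∀ p ∈ s, ‖ω (p.1 * τ g p.2) - ω p.1 * ω p.2‖ < ε

/-- Asymptotic abelianness of `τ`, in the mean along the net `F`. -/
def IsAsymptoticallyAbelian (l : Filter ι) (F : ι → Finset G) (τ : G → A ≃⋆ₐ[ℂ] A) : Prop :=
  ∀ a b, Tendsto (fun i => avg (F i) fun g => ‖a * τ g b - τ g b * a‖) l (𝓝 0)

namespace IsGNSMap

lemma map_sub_smul_one (hj : IsGNSMap ω j) (a : A) : ω (a - ω a • 1) = 0 := by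
  rw [map_sub, map_smul, hj.map_one, smul_eq_mul, mul_one, sub_self]

lemma inner_star_left (hj : IsGNSMap ω j) (a b : A) : inner ℂ (j (star a)) (j b) = ω (a * b) := by
  rw [hj.inner_eq, star_star]

lemma ofReal_norm_sq (hj : IsGNSMap ω j) (a : A) : ((‖j a‖ ^ 2 : ℝ) : ℂ) = ω (star a * a) := by
  rw [← hj.inner_eq, inner_self_eq_norm_sq_to_K]
  norm_cast

lemma norm_eq_norm_iff (hj : IsGNSMap ω j) {a b : A} :
    ‖j a‖ = ‖j b‖ ↔ ω (star a * a) = ω (star b * b) := by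
  rw [← hj.ofReal_norm_sq, ← hj.ofReal_norm_sq, Complex.ofReal_inj,
    sq_eq_sq₀ (norm_nonneg _) (norm_nonneg _)]

lemma norm_map_one (hj : IsGNSMap ω j) : ‖j 1‖ = 1 := by
  have hsq := hj.ofReal_norm_sq 1
  rw [star_one, one_mul, hj.map_one, ← Complex.ofReal_one, Complex.ofReal_inj] at hsq
  exact (pow_eq_one_iff_of_nonneg (norm_nonneg _) two_ne_zero).1 hsq

/-- If `‖x‖² - x*x = z*z`, then `‖x‖² ‖j y‖² - ‖j (xy)‖² = ‖j (zy)‖²`. -/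
lemma norm_map_mul_le (hj : IsGNSMap ω j) (x y : A) : ‖j (x * y)‖ ≤ ‖x‖ * ‖j y‖ := by
  let := CStarAlgebra.spectralOrder A
  let := CStarAlgebra.spectralOrderedRing A
  have hle : star x * x ≤ algebraMap ℝ A (‖x‖ ^ 2) := CStarAlgebra.star_mul_le_algebraMap_norm_sq
  obtain ⟨z, hz⟩ := CStarAlgebra.nonneg_iff_eq_star_mul_self.1 (sub_nonneg.2 hle)
  have hsum : star (x * y) * (x * y) + star (z * y) * (z * y) =
      ((‖x‖ ^ 2 : ℝ) : ℂ) • (star y * y) := by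
    calc star (x * y) * (x * y) + star (z * y) * (z * y)
        = star y * (star x * x + star z * z) * y := by simp only [star_mul]; noncomm_ring
      _ = star y * algebraMap ℝ A (‖x‖ ^ 2) * y := by rw [← hz, add_sub_cancel]
      _ = ((‖x‖ ^ 2 : ℝ) : ℂ) • (star y * y) := by
        rw [← Algebra.commutes, mul_assoc, ← Algebra.smul_def, Complex.coe_smul]
  have hsq : ‖j (x * y)‖ ^ 2 + ‖j (z * y)‖ ^ 2 = ‖x‖ ^ 2 * ‖j y‖ ^ 2 := by
    have h := congrArg ω hsum
    rw [map_add, map_smul, ← hj.ofReal_norm_sq, ← hj.ofReal_norm_sq, ← hj.ofReal_norm_sq,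
      smul_eq_mul] at h
    exact_mod_cast h
  refine le_of_sq_le_sq ?_ (by positivity)
  rw [mul_pow, ← hsq]
  exact le_add_of_nonneg_right (sq_nonneg _)

lemma norm_map_le (hj : IsGNSMap ω j) (a : A) : ‖j a‖ ≤ ‖a‖ := by
  simpa only [mul_one, hj.norm_map_one] using hj.norm_map_mul_le a 1

lemma norm_apply_le (hj : IsGNSMap ω j) (a : A) : ‖ω a‖ ≤ ‖a‖ := by
  calc ‖ω a‖ = ‖inner ℂ (j 1) (j a)‖ := by rw [hj.inner_eq, star_one, one_mul]
    _ ≤ ‖j 1‖ * ‖j a‖ := norm_inner_le_norm _ _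
    _ ≤ ‖a‖ := by rw [hj.norm_map_one, one_mul]; exact hj.norm_map_le a

lemma norm_map_action [Mul G] (hj : IsGNSMap ω j) (hτ : IsInvariantAction ω τ) (g : G) (a : A) :
    ‖j (τ g a)‖ = ‖j a‖ := by
  rw [hj.norm_eq_norm_iff, ← map_star, ← map_mul, hτ.invariant]

end IsGNSMap

lemma IsInvariantAction.map_comm [CommMagma G] (hτ : IsInvariantAction ω τ) (g h : G) (a : A) :
    τ g (τ h a) = τ h (τ g a) := by
  rw [hτ.map_map, hτ.map_map, mul_comm]

lemma IsWeaklyMixing.exists_seq_pairwise_lt (hmix : IsWeaklyMixing ω τ) (hj : IsGNSMap ω j)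
    {b : A} (hb : ω b = 0) {δ : ℝ} (hδ : 0 < δ) :
    ∃ s : ℕ → G, Pairwise fun k m => ‖ω (star (τ (s k) b) * τ (s m) b)‖ < δ := by
  classical
  let r (g h : G) : Prop := ‖ω (star (τ g b) * τ h b)‖ < δ
  have hsymm : Std.Symm r := ⟨fun g h hgh => by
    simp only [r, ← hj.inner_eq] at hgh ⊢
    rwa [norm_inner_symm]⟩
  obtain ⟨s, -, hs⟩ := exists_seq_of_forall_finset_exists' (fun _ => True) r fun S _ => by
    obtain ⟨g, hg⟩ := hmix (S.image fun h => (star (τ h b), b)) δ hδ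
    refine ⟨g, trivial, fun h hh => ?_⟩
    simpa only [r, hb, mul_zero, sub_zero] using hg _ (Finset.mem_image_of_mem _ hh)
  exact ⟨s, hs⟩

lemma IsWeaklyMixing.exists_seq_pairwise_mul_lt (hmix : IsWeaklyMixing ω τ) (hj : IsGNSMap ω j)
    {b : A} (hb : ω b = 0) {R δ : ℝ} (hR : 0 ≤ R) (hδ : 0 < δ) :
    ∃ s : ℕ → G, Pairwise fun k m => ‖ω (star (τ (s k) b) * τ (s m) b)‖ * R < δ := by
  obtain ⟨s, hs⟩ := hmix.exists_seq_pairwise_lt hj hb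
    (div_pos hδ (add_pos_of_nonneg_of_pos hR one_pos))
  refine ⟨s, fun k m hkm => ?_⟩
  calc _ ≤ ‖ω (star (τ (s k) b) * τ (s m) b)‖ * (R + 1) := by gcongr; linarith
    _ < δ := (lt_div_iff₀ (by positivity)).1 (hs hkm)

lemma isWeaklyMixing_of_tendsto_avg {l : Filter ι} [l.NeBot] {F : ι → Finset G}
    (hF : ∀ᶠ i in l, (F i).Nonempty)
    (h : ∀ a b, Tendsto (fun i => avg (F i) fun g => ‖ω (a * τ g b) - ω a * ω b‖) l (𝓝 0)) :
    IsWeaklyMixing ω τ := by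
  intro s ε hε
  have hsum := tendsto_finsetSum s fun p _ => h p.1 p.2
  rw [Finset.sum_const_zero] at hsum
  obtain ⟨i, hi, hlt⟩ := (hF.and (hsum.eventually_lt_const hε)).exists
  by_contra! hfar
  refine hlt.not_ge ?_
  calc ε = avg (F i) fun _ => ε := (avg_const hi ε).symm
    _ ≤ avg (F i) fun g => ∑ p ∈ s, ‖ω (p.1 * τ g p.2) - ω p.1 * ω p.2‖ := by
      refine avg_mono _ fun g _ => ?_
      obtain ⟨p, hp, hle⟩ := hfar g
      exact hle.trans (Finset.single_le_sum
        (f := fun p : A × A => ‖ω (p.1 * τ g p.2) - ω p.1 * ω p.2‖) (fun _ _ => norm_nonneg _) hp)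
    _ = ∑ p ∈ s, avg (F i) fun g => ‖ω (p.1 * τ g p.2) - ω p.1 * ω p.2‖ := by
      simp only [avg, Finset.smul_sum]
      exact Finset.sum_comm

end System

section Dynamics

variable [CStarAlgebra A] [NormedAddCommGroup H] [InnerProductSpace ℂ H]
  {ω : A →ₗ[ℂ] ℂ} {τ : G → A ≃⋆ₐ[ℂ] A} {j : A →ₗ[ℂ] H} {l : Filter ι} {F F₁ F₂ : ι → Finset G}

section Group

variable [Group G]

lemma tendsto_avg_map_action_zero (hj : IsGNSMap ω j) (hτ : IsInvariantAction ω τ)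
    (hmix : IsWeaklyMixing ω τ) (hF : IsFolnerNet l F) {b : A} (hb : ω b = 0) :
    Tendsto (fun i => avg (F i) fun x => j (τ x b)) l (𝓝 0) := by
  refine tendsto_avg_zero_of_inner_shift_tendsto
    (fun x => (hj.norm_map_action hτ x b).le) fun δ hδ => ?_
  obtain ⟨s, hs⟩ := hmix.exists_seq_pairwise_lt hj hb hδ
  refine ⟨fun k => Equiv.mulRight (s k), fun k => hF.asympInvariant (s k),
    fun k m hkm => ⟨_, hs hkm, ?_⟩⟩
  have hinner (x : G) : inner ℂ (j (τ (x * s k) b)) (j (τ (x * s m) b)) =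
      ω (star (τ (s k) b) * τ (s m) b) := by
    rw [hj.inner_eq, ← hτ.map_map, ← hτ.map_map, ← map_star, ← map_mul, hτ.invariant]
  simp only [Equiv.coe_mulRight, hinner]
  exact tendsto_const_nhds.congr' (hF.nonempty.mono fun i hi => (avg_const hi _).symm)

lemma tendsto_avg_map_action (hj : IsGNSMap ω j) (hτ : IsInvariantAction ω τ)
    (hmix : IsWeaklyMixing ω τ) (hF : IsFolnerNet l F) (b : A) :
    Tendsto (fun i => avg (F i) fun x => j (τ x b)) l (𝓝 (ω b • j 1)) := by
  have hzero := tendsto_avg_map_action_zero hj hτ hmix hF (hj.map_sub_smul_one b)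
  rw [← zero_add (ω b • j 1)]
  refine (hzero.add_const _).congr' (hF.nonempty.mono fun i hi => ?_)
  simp only [map_sub, map_smul, map_one, avg_sub, avg_const hi, sub_add_cancel]

lemma tendsto_avg_apply_mul_action (hj : IsGNSMap ω j) (hτ : IsInvariantAction ω τ)
    (hmix : IsWeaklyMixing ω τ) (hF : IsFolnerNet l F) (a b : A) :
    Tendsto (fun i => avg (F i) fun x => ω (a * τ x b)) l (𝓝 (ω a * ω b)) := by
  let L := innerSL ℂ (j (star a))
  have hL (c : A) : L (j c) = ω (a * c) := hj.inner_star_left a c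
  have hlim := (L.continuous.tendsto _).comp (tendsto_avg_map_action hj hτ hmix hF b)
  rw [map_smul, hL, mul_one, smul_eq_mul, mul_comm] at hlim
  refine hlim.congr fun i => ?_
  simp only [← hL]
  exact (avg_map (L.toLinearMap.restrictScalars ℝ) _ _).symm

end Group

lemma tendsto_avg_apply_action_commutator_zero (hj : IsGNSMap ω j)
    (hab : IsAsymptoticallyAbelian l F₁ τ) (hF₂ : ∀ᶠ i in l, (F₂ i).Nonempty) (b C D : A) :
    Tendsto (fun i => avg (F₁ i ×ˢ F₂ i) fun p =>
      ω (τ p.1 C * τ p.2 (star b * (b * τ p.1 D - τ p.1 D * b)))) l (𝓝 0) := by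
  have hbound (p : G × G) : ‖ω (τ p.1 C * τ p.2 (star b * (b * τ p.1 D - τ p.1 D * b)))‖ ≤
      (‖C‖ * ‖b‖) • ‖b * τ p.1 D - τ p.1 D * b‖ := by
    refine (hj.norm_apply_le _).trans ?_
    rw [map_mul, ← mul_assoc]
    simpa only [StarAlgEquiv.norm_map, norm_star, smul_eq_mul] using
      norm_mul₃_le (a := τ p.1 C) (b := τ p.2 (star b)) (c := τ p.2 (b * τ p.1 D - τ p.1 D * b))
  have hlim := (hab b D).const_smul (‖C‖ * ‖b‖)
  rw [smul_zero] at hlim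
  refine squeeze_zero_norm' (hF₂.mono fun i hi => ?_) hlim
  rw [← avg_product_fst (F₁ i) hi, ← avg_smul]
  exact (norm_avg_le_avg_norm _ _).trans (avg_mono _ fun p _ => hbound p)

variable [CommGroup G] (hj : IsGNSMap ω j) (hω : IsTracial ω) (hτ : IsInvariantAction ω τ)
  (hmix : IsWeaklyMixing ω τ) (hF₁ : IsFolnerNet l F₁) (hF₂ : IsFolnerNet l F₂)

include hj hω hτ hmix hF₁ hF₂

lemma tendsto_avg_apply_action_mul_zero {B : A} (C D : A) (hB : ω B = 0) :
    Tendsto (fun i => avg (F₁ i ×ˢ F₂ i) fun p => ω (τ p.1 C * τ p.2 (B * τ p.1 D))) l (𝓝 0) := by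
  have hv (p : G × G) : ‖j (τ p.2 (B * τ p.1 D))‖ ≤ ‖B‖ * ‖D‖ := by
    refine (hj.norm_map_le _).trans ?_
    simpa only [StarAlgEquiv.norm_map] using norm_mul_le B (τ p.1 D)
  have hT (p : G × G) : ‖innerSL ℂ (j (star (τ p.1 C)))‖ ≤ ‖C‖ := by
    rw [innerSL_apply_norm, ← map_star, hj.norm_map_action hτ, ← norm_star C]
    exact hj.norm_map_le _
  suffices h : Tendsto (fun i => avg (F₁ i ×ˢ F₂ i) fun p =>
      innerSL ℂ (j (star (τ p.1 C))) (j (τ p.2 (B * τ p.1 D)))) l (𝓝 0) by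
    simpa only [innerSL_apply_apply, hj.inner_star_left] using h
  refine tendsto_avg_apply_zero_of_inner_shift_tendsto hv hT fun δ hδ => ?_
  obtain ⟨s, hs⟩ := hmix.exists_seq_pairwise_mul_lt hj hB (R := ‖D‖ * ‖D‖) (by positivity) hδ
  refine ⟨fun k => (Equiv.refl G).prodCongr (Equiv.mulRight (s k)),
    fun k => (hF₂.asympInvariant (s k)).prod_left F₁, fun _ _ => rfl, fun k m hkm =>
    ⟨ω (star (τ (s k) B) * τ (s m) B) * ω (τ (s m) D * star (τ (s k) D)), ?_, ?_⟩⟩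
  · rw [norm_mul]
    refine (mul_le_mul_of_nonneg_left ?_ (norm_nonneg _)).trans_lt (hs hkm)
    refine (hj.norm_apply_le _).trans ((norm_mul_le _ _).trans_eq ?_)
    simp only [norm_star, StarAlgEquiv.norm_map]
  have hinner (p : G × G) :
      inner ℂ (j (τ (p.2 * s k) (B * τ p.1 D))) (j (τ (p.2 * s m) (B * τ p.1 D))) =
        ω (star (τ (s k) B) * τ (s m) B * τ p.1 (τ (s m) D * star (τ (s k) D))) := by
    rw [hj.inner_eq, ← hτ.map_map, ← hτ.map_map, ← map_star, ← map_mul, hτ.invariant]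
    simp only [map_mul, map_star, star_mul, hτ.map_comm (s _) p.1]
    rw [mul_assoc, hω]
    simp only [mul_assoc]
  simp only [Equiv.prodCongr_apply, Prod.map, Equiv.coe_mulRight, Equiv.refl_apply, hinner]
  refine (tendsto_avg_apply_mul_action hj hτ hmix hF₁ _ _).congr'
    (hF₂.nonempty.mono fun i hi => (avg_product_fst (F₁ i) hi _).symm)

lemma tendsto_avg_apply_action_mul (B C D : A) :
    Tendsto (fun i => avg (F₁ i ×ˢ F₂ i) fun p => ω (τ p.1 C * τ p.2 (B * τ p.1 D))) l
      (𝓝 (ω C * ω B * ω D)) := by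
  have hzero := tendsto_avg_apply_action_mul_zero hj hω hτ hmix hF₁ hF₂ C D (hj.map_sub_smul_one B)
  have hconst := (tendsto_avg_apply_mul_action hj hτ hmix hF₂ C D).const_smul (ω B)
  have hinv (p : G × G) : ω (τ p.1 C * τ p.2 (τ p.1 D)) = ω (C * τ p.2 D) := by
    rw [hτ.map_comm, ← map_mul, hτ.invariant]
  have hlim := hzero.add hconst
  rw [zero_add, smul_eq_mul, mul_left_comm, ← mul_assoc] at hlim
  refine hlim.congr' (hF₁.nonempty.mono fun i hi => ?_)
  rw [← avg_product_snd hi (F₂ i) fun g => ω (C * τ g D), ← avg_smul, ← avg_add]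
  simp only [← hinv, sub_mul, mul_sub, map_sub, smul_mul_assoc, one_mul, map_smul, mul_smul_comm,
    sub_add_cancel]

variable (hab : IsAsymptoticallyAbelian l F₁ τ)

include hab in
lemma tendsto_avg_apply_action_conj (b C D : A) :
    Tendsto (fun i => avg (F₁ i ×ˢ F₂ i) fun p => ω (τ p.1 C * τ p.2 (star b * τ p.1 D * b))) l
      (𝓝 (ω C * ω (star b * b) * ω D)) := by
  have hlim := (tendsto_avg_apply_action_mul hj hω hτ hmix hF₁ hF₂ (star b * b) C D).sub
    (tendsto_avg_apply_action_commutator_zero hj hab hF₂.nonempty b C D)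
  rw [sub_zero] at hlim
  refine hlim.congr fun i => ?_
  simp only [← avg_sub, ← map_sub, ← mul_sub, mul_assoc, sub_sub_cancel]

include hab in
lemma tendsto_avg_map_action_triple_zero {a : A} (b c : A) (ha : ω a = 0) :
    Tendsto (fun i => avg (F₁ i ×ˢ F₂ i) fun p => j (τ (p.2 * p.1) a * τ p.2 b * τ p.1 c)) l
      (𝓝 0) := by
  have hv (p : G × G) : ‖j (τ (p.2 * p.1) a * τ p.2 b * τ p.1 c)‖ ≤ ‖a‖ * ‖b‖ * ‖c‖ := by
    refine (hj.norm_map_le _).trans ?_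
    simpa only [StarAlgEquiv.norm_map] using
      norm_mul₃_le (a := τ (p.2 * p.1) a) (b := τ p.2 b) (c := τ p.1 c)
  refine tendsto_avg_zero_of_inner_shift_tendsto hv fun δ hδ => ?_
  obtain ⟨s, hs⟩ :=
    hmix.exists_seq_pairwise_mul_lt hj ha (R := ‖c‖ * ‖c‖ * (‖b‖ * ‖b‖)) (by positivity) hδ
  refine ⟨fun k => (Equiv.mulRight (s k)).prodCongr (Equiv.refl G),
    fun k => (hF₁.asympInvariant (s k)).prod_right F₂, fun k m hkm =>
    ⟨ω (τ (s m) c * star (τ (s k) c)) * ω (star b * b) * ω (star (τ (s k) a) * τ (s m) a), ?_, ?_⟩⟩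
  · rw [mul_comm, norm_mul, norm_mul]
    refine (mul_le_mul_of_nonneg_left ?_ (norm_nonneg _)).trans_lt (hs hkm)
    gcongr <;>
    · refine (hj.norm_apply_le _).trans ((norm_mul_le _ _).trans_eq ?_)
      simp only [norm_star, StarAlgEquiv.norm_map]
  have hinner (p : G × G) :
      inner ℂ (j (τ (p.2 * (p.1 * s k)) a * τ p.2 b * τ (p.1 * s k) c))
          (j (τ (p.2 * (p.1 * s m)) a * τ p.2 b * τ (p.1 * s m) c)) =
        ω (τ p.1 (τ (s m) c * star (τ (s k) c)) *
          τ p.2 (star b * τ p.1 (star (τ (s k) a) * τ (s m) a) * b)) := by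
    simp only [hj.inner_eq, map_mul, map_star, star_mul, hτ.map_map]
    rw [← mul_assoc, hω]
    simp only [mul_assoc]
  simp only [Equiv.prodCongr_apply, Prod.map, Equiv.coe_mulRight, Equiv.refl_apply, hinner]
  exact tendsto_avg_apply_action_conj hj hω hτ hmix hF₁ hF₂ hab b _ _

lemma tendsto_avg_map_action_pair_zero {b : A} (c : A) (hb : ω b = 0) :
    Tendsto (fun i => avg (F₁ i ×ˢ F₂ i) fun p => j (τ p.2 b * τ p.1 c)) l (𝓝 0) := by
  have hv (p : G × G) : ‖j (τ p.2 b * τ p.1 c)‖ ≤ ‖b‖ * ‖c‖ := by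
    refine (hj.norm_map_le _).trans ?_
    simpa only [StarAlgEquiv.norm_map] using norm_mul_le (τ p.2 b) (τ p.1 c)
  refine tendsto_avg_zero_of_inner_shift_tendsto hv fun δ hδ => ?_
  obtain ⟨s, hs⟩ := hmix.exists_seq_pairwise_mul_lt hj hb (R := ‖c * star c‖) (norm_nonneg _) hδ
  refine ⟨fun k => (Equiv.refl G).prodCongr (Equiv.mulRight (s k)),
    fun k => (hF₂.asympInvariant (s k)).prod_left F₁, fun k m hkm =>
    ⟨ω (c * star c) * ω (star (τ (s k) b) * τ (s m) b) * ω 1, ?_, ?_⟩⟩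
  · rw [hj.map_one, mul_one, mul_comm, norm_mul]
    exact (mul_le_mul_of_nonneg_left (hj.norm_apply_le _) (norm_nonneg _)).trans_lt (hs hkm)
  have hinner (p : G × G) :
      inner ℂ (j (τ (p.2 * s k) b * τ p.1 c)) (j (τ (p.2 * s m) b * τ p.1 c)) =
        ω (τ p.1 (c * star c) * τ p.2 (star (τ (s k) b) * τ (s m) b * τ p.1 1)) := by
    simp only [hj.inner_eq, map_mul, map_star, map_one, mul_one, star_mul, hτ.map_map]
    rw [← mul_assoc, hω]
    simp only [mul_assoc]
  simp only [Equiv.prodCongr_apply, Prod.map, Equiv.coe_mulRight, Equiv.refl_apply, hinner]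
  exact tendsto_avg_apply_action_mul hj hω hτ hmix hF₁ hF₂ _ _ 1

include hab in
theorem tendsto_avg_map_action_triple (a b c : A) :
    Tendsto (fun i => avg (F₁ i ×ˢ F₂ i) fun p => j (τ (p.2 * p.1) a * τ p.2 b * τ p.1 c)) l
      (𝓝 ((ω a * ω b * ω c) • j 1)) := by
  have ha := tendsto_avg_map_action_triple_zero hj hω hτ hmix hF₁ hF₂ hab b c
    (hj.map_sub_smul_one a)
  have hb := tendsto_avg_map_action_pair_zero hj hω hτ hmix hF₁ hF₂ c (hj.map_sub_smul_one b)
  have hc := tendsto_avg_map_action hj hτ hmix hF₁ c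
  have hlim := ha.add ((hb.const_smul (ω a)).add (hc.const_smul (ω a * ω b)))
  rw [smul_zero, zero_add, zero_add, smul_smul] at hlim
  refine hlim.congr' (hF₂.nonempty.mono fun i hi => ?_)
  rw [← avg_product_fst (F₁ i) hi, ← avg_smul, ← avg_smul, ← avg_add, ← avg_add]
  congr 1 with p
  simp only [map_sub, map_smul, map_one, sub_mul, smul_mul_assoc, one_mul, smul_sub, smul_smul,
    sub_add_cancel]

end Dynamics

section Integral

lemma restrict_count_finset [MeasurableSpace X] {S : Finset X} (hS : MeasurableSet (S : Set X)) :
    (Measure.count : Measure X).restrict S = ∑ x ∈ S, Measure.dirac x := by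
  classical
  ext t ht
  have hinter : t ∩ S = ({x ∈ S | x ∈ t} : Finset X) := by ext; simp [and_comm]
  rw [Measure.restrict_apply ht, Measure.count_apply (ht.inter hS), hinter,
    Set.encard_coe_eq_coe_finsetCard]
  simp [Measure.dirac_apply' _ ht, Set.indicator_apply]

lemma eq_of_inseparable_of_measurable [TopologicalSpace X] [MeasurableSpace X] [BorelSpace X]
    [MeasurableSpace Y] [MeasurableSingletonClass Y] {f : X → Y} (hf : Measurable f) (x y : X)
    (hxy : Inseparable x y) : f x = f y :=
  (hxy.mem_measurableSet_iff (hf (measurableSet_singleton (f y)))).2 rfl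

variable [TopologicalSpace X] [R0Space X] [MeasurableSpace X] [OpensMeasurableSpace X]

lemma ae_dirac_eq_of_inseparable {f : X → E} (hf : ∀ x y, Inseparable x y → f x = f y) (x : X) :
    f =ᵐ[Measure.dirac x] fun _ => f x := by
  have hcl : closure {x} ∈ ae (Measure.dirac x) :=
    (mem_ae_dirac_iff isClosed_closure.measurableSet).2 (subset_closure rfl)
  filter_upwards [hcl] with y hy
  exact (hf x y (specializes_iff_inseparable.1 (specializes_iff_mem_closure.2 hy))).symm

variable [NormedAddCommGroup E] [NormedSpace ℝ E] [CompleteSpace E]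

lemma setIntegral_count_finset {S : Finset X} (hS : MeasurableSet (S : Set X)) {f : X → E}
    (hf : ∀ x y, Inseparable x y → f x = f y) :
    ∫ x in S, f x ∂Measure.count = ∑ x ∈ S, f x := by
  have hconst := ae_dirac_eq_of_inseparable hf
  rw [restrict_count_finset hS, integral_finsetSum_measure fun x _ =>
    (integrable_const (f x)).congr (hconst x).symm]
  refine Finset.sum_congr rfl fun x _ => ?_
  rw [integral_congr_ae (hconst x), integral_const, probReal_univ, one_smul]

lemma inv_count_smul_setIntegral {S : Finset X} (hS : MeasurableSet (S : Set X)) {f : X → E}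
    (hf : ∀ x y, Inseparable x y → f x = f y) :
    (Measure.count (S : Set X)).toReal⁻¹ • ∫ x in S, f x ∂Measure.count = avg S f := by
  rw [setIntegral_count_finset hS hf, Measure.count_apply_finset' hS, avg, ENNReal.toReal_natCast]

variable [Group G] [TopologicalSpace G] [IsTopologicalGroup G] [MeasurableSpace G]
  [BorelSpace G]

lemma inv_count_smul_setIntegral_mul_singleton {S : Finset G} (hS : MeasurableSet (S : Set G))
    (t : G) {f : G → E} (hf : ∀ x y, Inseparable x y → f x = f y) :
    (Measure.count (S : Set G)).toReal⁻¹ • ∫ x in (S : Set G) * {t}, f x ∂Measure.count =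
      avg (S.map (Equiv.mulRight t).toEmbedding) f := by
  have hcoe : (S.map (Equiv.mulRight t).toEmbedding : Set G) = S * {t} := by
    rw [Finset.coe_map, Set.mul_singleton]; rfl
  have hmeas : MeasurableSet (S.map (Equiv.mulRight t).toEmbedding : Set G) := by
    rw [hcoe, Set.mul_singleton]
    exact (MeasurableEquiv.mulRight t).measurableSet_image.2 hS
  rw [← inv_count_smul_setIntegral hmeas hf, ← hcoe, Measure.count_apply_finset' hmeas,
    Measure.count_apply_finset' hS, Finset.card_map]

lemma inv_count_mul_count_smul_setIntegral_setIntegral {S₁ S₂ : Finset G}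
    (hS₁ : MeasurableSet (S₁ : Set G)) (hS₂ : MeasurableSet (S₂ : Set G)) (t₁ t₂ : G)
    {f : G → G → E} (hf₁ : ∀ g x y, Inseparable x y → f x g = f y g)
    (hf₂ : ∀ h x y, Inseparable x y → f h x = f h y) :
    ((Measure.count (S₁ : Set G)).toReal * (Measure.count (S₂ : Set G)).toReal)⁻¹ •
        ∫ h in (S₁ : Set G) * {t₁}, ∫ g in (S₂ : Set G) * {t₂}, f h g
          ∂Measure.count ∂Measure.count =
      avg (S₁.map (Equiv.mulRight t₁).toEmbedding ×ˢ S₂.map (Equiv.mulRight t₂).toEmbedding)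
        fun p => f p.1 p.2 := by
  rw [mul_inv, mul_smul, ← integral_smul]
  simp only [inv_count_smul_setIntegral_mul_singleton hS₂ t₂ (hf₂ _)]
  rw [avg_product]
  refine inv_count_smul_setIntegral_mul_singleton hS₁ t₁ fun x y hxy =>
    congrArg _ (funext fun g => hf₁ g x y hxy)

end Integral

section Measurability

variable [CStarAlgebra A] [TopologicalSpace G] [MeasurableSpace G] [BorelSpace G]
  {ω : A →ₗ[ℂ] ℂ} {τ : G → A ≃⋆ₐ[ℂ] A}

lemma isAsymptoticallyAbelian_translate [Group G] [IsTopologicalGroup G]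
    (hcomm : ∀ a b, Measurable fun g => ‖a * τ g b - τ g b * a‖)
    {l : Filter ι} {Λ : ι → Set G} (hmeas : ∀ᶠ i in l, MeasurableSet (Λ i))
    (hab : ∀ a b, ∀ ε > (0 : ℝ), ∀ᶠ i in l, ∀ h, (Measure.count (Λ i)).toReal⁻¹ *
      ∫ g in Λ i * {h}, ‖a * τ g b - τ g b * a‖ ∂Measure.count ≤ ε)
    {F : ι → Finset G} (hF : ∀ᶠ i in l, (F i : Set G) = Λ i) (t : Y → G) :
    IsAsymptoticallyAbelian (l ×ˢ ⊤)
      (fun p => (F p.1).map (Equiv.mulRight (t p.2)).toEmbedding) τ := by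
  refine fun a b => Metric.nhds_basis_closedBall.tendsto_right_iff.2 fun ε hε => ?_
  filter_upwards [(hF.and (hmeas.and (hab a b ε hε))).prod_inl ⊤] with p ⟨hp, hm, hle⟩
  have havg := inv_count_smul_setIntegral_mul_singleton (hp ▸ hm) (t p.2)
    (eq_of_inseparable_of_measurable (hcomm a b))
  rw [hp] at havg
  rw [mem_closedBall_zero_iff, Real.norm_of_nonneg (avg_nonneg _ fun _ => norm_nonneg _), ← havg]
  exact hle (t p.2)

variable (hmeas : ∀ a b, Measurable fun g => ω (a * τ g b))

include hmeas

lemma isWeaklyMixing_of_tendsto_setIntegral [CommGroup G] [R0Space G] {l : Filter ι} [l.NeBot]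
    {Λ : ι → Set G} (hΛ : IsFoelner G Measure.count l Λ)
    (h : ∀ a b, Tendsto (fun i => (Measure.count (Λ i)).toReal⁻¹ *
      ∫ g in Λ i, ‖ω (a * τ g b) - ω a * ω b‖ ∂Measure.count) l (𝓝 0)) :
    IsWeaklyMixing ω τ := by
  obtain ⟨F, hF, hFΛ⟩ := exists_isFolnerNet_of_isFoelner hΛ
  refine isWeaklyMixing_of_tendsto_avg hF.nonempty fun a b => (h a b).congr' ?_
  filter_upwards [hFΛ, hΛ.eventually_measurableSet] with i hi hm
  rw [← hi] at hm ⊢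
  exact inv_count_smul_setIntegral hm
    (eq_of_inseparable_of_measurable ((hmeas a b).sub_const _).norm)

variable [NormedAddCommGroup H] [InnerProductSpace ℂ H] {j : A →ₗ[ℂ] H} (hj : IsGNSMap ω j)
  (hω : IsTracial ω)

include hj hω

/-- An element `d` with `ω (v * d) = 0` for all `v` is killed by `j` together with the two-sided
ideal it generates, because `ω` is tracial. -/
lemma map_mul_action_mul_eq_of_inseparable {x y : G} (hxy : Inseparable x y) (u v w : A) :
    j (u * τ x v * w) = j (u * τ y v * w) := by
  have hzero (c : A) : ω (c * (τ x v - τ y v)) = 0 := by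
    rw [mul_sub, map_sub, sub_eq_zero]
    exact eq_of_inseparable_of_measurable (hmeas c v) x y hxy
  rw [← sub_eq_zero, ← map_sub, ← sub_mul, ← mul_sub, ← inner_self_eq_zero (𝕜 := ℂ), hj.inner_eq,
    ← mul_assoc, hω, ← mul_assoc, ← mul_assoc]
  exact hzero _

lemma map_action_triple_eq_of_inseparable_left [Mul G] (hτ : IsInvariantAction ω τ)
    (a b c : A) (h x y : G) (hxy : Inseparable x y) :
    j (τ (x * h) a * τ x b * τ h c) = j (τ (y * h) a * τ y b * τ h c) := by
  simpa only [← hτ.map_map, ← map_mul, one_mul] using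
    map_mul_action_mul_eq_of_inseparable hmeas hj hω hxy 1 (τ h a * b) (τ h c)

lemma map_action_triple_eq_of_inseparable_right [CommMagma G] (hτ : IsInvariantAction ω τ)
    (a b c : A) (g x y : G) (hxy : Inseparable x y) :
    j (τ (g * x) a * τ g b * τ x c) = j (τ (g * y) a * τ g b * τ y c) := by
  have ha := map_mul_action_mul_eq_of_inseparable hmeas hj hω hxy 1 (τ g a) (τ g b * τ x c)
  have hc := map_mul_action_mul_eq_of_inseparable hmeas hj hω hxy (τ y (τ g a) * τ g b) c 1
  simp only [one_mul, mul_one, ← mul_assoc] at ha hc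
  rw [← hτ.map_map, ← hτ.map_map, hτ.map_comm, hτ.map_comm g y, ha, hc]

end Measurability

end WeakMixingAverage

open WeakMixingAverage in
theorem prop_5_5_2_general {A G H ι : Type*} [CStarAlgebra A] {ω : A →ₗ[ℂ] ℂ}
    (hω : IsTracial ω) [CommGroup G] [TopologicalSpace G] [IsTopologicalGroup G] [MeasurableSpace G]
    [BorelSpace G] {τ : G → A ≃⋆ₐ[ℂ] A} (hτ : IsInvariantAction ω τ)
    (hτ_meas : ∀ a b, Measurable fun g => ω (a * τ g b)) (hmix : IsWeaklyMixing ω τ)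
    [NormedAddCommGroup H] [InnerProductSpace ℂ H] [CompleteSpace H] {j : A →ₗ[ℂ] H}
    (hj : IsGNSMap ω j) {l : Filter ι} {Λ₁ Λ₂ : ι → Set G}
    (hΛ₁ : IsFoelner G Measure.count l Λ₁) (hΛ₂ : IsFoelner G Measure.count l Λ₂)
    (hcomm_meas : ∀ a b, Measurable fun g => ‖a * τ g b - τ g b * a‖)
    (hab : ∀ a b, ∀ ε > (0 : ℝ), ∀ᶠ i in l, ∀ h, (Measure.count (Λ₁ i)).toReal⁻¹ *
      ∫ g in Λ₁ i * {h}, ‖a * τ g b - τ g b * a‖ ∂Measure.count ≤ ε)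
    (a b c : A) {ε : ℝ} (hε : 0 < ε) :
    ∀ᶠ i in l, ∀ g₁ g₂ : G,
      ‖((Measure.count (Λ₁ i)).toReal * (Measure.count (Λ₂ i)).toReal)⁻¹ •
          (∫ h in Λ₁ i * {g₁}, ∫ g in Λ₂ i * {g₂},
            j (τ (g * h) a * τ g b * τ h c) ∂Measure.count ∂Measure.count)
        - (ω a * ω b * ω c) • j 1‖ ≤ ε := by
  obtain ⟨F₁, hF₁, hFΛ₁⟩ := exists_isFolnerNet_of_isFoelner hΛ₁
  obtain ⟨F₂, hF₂, hFΛ₂⟩ := exists_isFolnerNet_of_isFoelner hΛ₂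
  have hT₁ := hF₁.translate (Prod.fst : G × G → G)
  have hT₂ := hF₂.translate (Prod.snd : G × G → G)
  have hab_net := isAsymptoticallyAbelian_translate hcomm_meas hΛ₁.eventually_measurableSet hab hFΛ₁
    (Prod.fst : G × G → G)
  have hlim := tendsto_avg_map_action_triple hj hω hτ hmix hT₁ hT₂ hab_net a b c
  have hclose := Metric.nhds_basis_closedBall.tendsto_right_iff.1 hlim ε hε
  rw [← principal_univ, eventually_prod_principal_iff] at hclose
  filter_upwards [hclose, hFΛ₁, hFΛ₂, hΛ₁.eventually_measurableSet,
    hΛ₂.eventually_measurableSet] with i hi h₁ h₂ hm₁ hm₂ g₁ g₂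
  rw [← h₁] at hm₁ ⊢
  rw [← h₂] at hm₂ ⊢
  rw [inv_count_mul_count_smul_setIntegral_setIntegral hm₁ hm₂ g₁ g₂
    (f := fun h g => j (τ (g * h) a * τ g b * τ h c))
    (map_action_triple_eq_of_inseparable_right hτ_meas hj hω hτ a b c)
    (map_action_triple_eq_of_inseparable_left hτ_meas hj hω hτ a b c), ← dist_eq_norm]
  exact hi (g₁, g₂) trivial

/-- **Proposition 5.5(2)** (counting measure case). -/
theorem prop_5_5_2
    -- a unital C*-algebra A
    {A : Type*} [NormedRing A] [StarRing A] [CStarRing A] [NormedAlgebra ℂ A]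
    [CompleteSpace A] [StarModule ℂ A]
    -- a tracial state ω on A
    (ω : A →ₗ[ℂ] ℂ) (hω_pos : ∀ a : A, 0 ≤ ω (star a * a)) (hω_one : ω 1 = 1)
    (hω_tracial : ∀ a b : A, ω (a * b) = ω (b * a))
    -- a countable second countable topological abelian group G with the counting measure
    -- on its Borel σ-algebra
    {G : Type*} [CommGroup G] [Countable G] [TopologicalSpace G] [IsTopologicalGroup G]
    [SecondCountableTopology G] [MeasurableSpace G] [BorelSpace G]
    -- the action τ, making (A, ω, τ, G) a C*-dynamical system
    (τ : G → A ≃⋆ₐ[ℂ] A)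
    (hτ_one : ∀ a : A, τ 1 a = a)
    (hτ_mul : ∀ g h a, τ g (τ h a) = τ (g * h) a)
    (hω_inv : ∀ g a, ω (τ g a) = ω a)
    (hτ_meas : ∀ a b : A, Measurable fun g : G => ω (a * τ g b))
    -- the system is weakly mixing (w.r.t. some, equivalently every, Følner sequence in G)
    (hWM : ∃ Λ : ℕ → Set G, (∀ n, MeasurableSet (Λ n)) ∧
      (∀ᶠ n in atTop, 0 < Measure.count (Λ n) ∧ Measure.count (Λ n) < ⊤) ∧
      (∀ g : G, Tendsto
        (fun n => (Measure.count (symmDiff (Λ n) (Λ n * {g}))).toReal / (Measure.count (Λ n)).toReal)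
        atTop (𝓝 0)) ∧
      ∀ a b : A, Tendsto
        (fun n => (Measure.count (Λ n)).toReal⁻¹ * ∫ g in Λ n, ‖ω (a * τ g b) - ω a * ω b‖ ∂Measure.count)
        atTop (𝓝 0))
    -- (g,h,j,k) ↦ ω(τ_h(a₁) τ_g(a₂) τ_{gh}(a₃) τ_{jk}(a₄) τ_j(a₅) τ_k(a₆)) is
    -- Σ² × Σ²-measurable
    (hmeas6 : ∀ a₁ a₂ a₃ a₄ a₅ a₆ : A, Measurable fun q : (G × G) × (G × G) =>
      ω (τ q.1.2 a₁ * τ q.1.1 a₂ * τ (q.1.1 * q.1.2) a₃ *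
        τ (q.2.1 * q.2.2) a₄ * τ q.2.1 a₅ * τ q.2.2 a₆))
    -- a uniform Følner sequence (Λ1 n) in G ...
    (Λ1 : ℕ → Set G)
    (hΛ1meas : ∀ n, MeasurableSet (Λ1 n))
    (hΛ1fin : ∀ᶠ n in atTop, 0 < Measure.count (Λ1 n) ∧ Measure.count (Λ1 n) < ⊤)
    (hΛ1folner : ∀ g : G, Tendsto
      (fun n => (Measure.count (symmDiff (Λ1 n) (Λ1 n * {g}))).toReal / (Measure.count (Λ1 n)).toReal)
      atTop (𝓝 0))
    (hΛ1unif : ∀ᶠ m in atTop, ∀ ε > (0 : ℝ), ∀ᶠ n in atTop, ∀ g ∈ Λ1 m,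
      (Measure.count (symmDiff (Λ1 n) (Λ1 n * {g}))).toReal ≤ ε * (Measure.count (Λ1 n)).toReal)
    -- ... satisfying the Tempel'man condition ...
    (hΛ1temp : ∃ c : ℝ, 0 < c ∧ ∀ᶠ n in atTop, MeasurableSet ((Λ1 n)⁻¹ * Λ1 n) ∧
      Measure.count ((Λ1 n)⁻¹ * Λ1 n) ≤ ENNReal.ofReal c * Measure.count (Λ1 n))
    -- ... and such that (Λ1 n⁻¹ Λ1 n) is also Følner in G
    (hΛ1invfin : ∀ᶠ n in atTop, 0 < Measure.count ((Λ1 n)⁻¹ * Λ1 n) ∧ Measure.count ((Λ1 n)⁻¹ * Λ1 n) < ⊤)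
    (hΛ1invfolner : ∀ g : G, Tendsto
      (fun n => (Measure.count (symmDiff ((Λ1 n)⁻¹ * Λ1 n) (((Λ1 n)⁻¹ * Λ1 n) * {g}))).toReal /
        (Measure.count ((Λ1 n)⁻¹ * Λ1 n)).toReal)
      atTop (𝓝 0))
    -- a uniform Følner sequence (Λ2 n) in G ...
    (Λ2 : ℕ → Set G)
    (hΛ2meas : ∀ n, MeasurableSet (Λ2 n))
    (hΛ2fin : ∀ᶠ n in atTop, 0 < Measure.count (Λ2 n) ∧ Measure.count (Λ2 n) < ⊤)
    (hΛ2folner : ∀ g : G, Tendsto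
      (fun n => (Measure.count (symmDiff (Λ2 n) (Λ2 n * {g}))).toReal / (Measure.count (Λ2 n)).toReal)
      atTop (𝓝 0))
    (hΛ2unif : ∀ᶠ m in atTop, ∀ ε > (0 : ℝ), ∀ᶠ n in atTop, ∀ g ∈ Λ2 m,
      (Measure.count (symmDiff (Λ2 n) (Λ2 n * {g}))).toReal ≤ ε * (Measure.count (Λ2 n)).toReal)
    -- ... satisfying the Tempel'man condition ...
    (hΛ2temp : ∃ c : ℝ, 0 < c ∧ ∀ᶠ n in atTop, MeasurableSet ((Λ2 n)⁻¹ * Λ2 n) ∧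
      Measure.count ((Λ2 n)⁻¹ * Λ2 n) ≤ ENNReal.ofReal c * Measure.count (Λ2 n))
    -- ... and such that (Λ2 n⁻¹ Λ2 n) is also Følner in G
    (hΛ2invfin : ∀ᶠ n in atTop, 0 < Measure.count ((Λ2 n)⁻¹ * Λ2 n) ∧ Measure.count ((Λ2 n)⁻¹ * Λ2 n) < ⊤)
    (hΛ2invfolner : ∀ g : G, Tendsto
      (fun n => (Measure.count (symmDiff ((Λ2 n)⁻¹ * Λ2 n) (((Λ2 n)⁻¹ * Λ2 n) * {g}))).toReal /
        (Measure.count ((Λ2 n)⁻¹ * Λ2 n)).toReal)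
      atTop (𝓝 0))
    -- a GNS representation (H, j) of (A, ω)
    {H : Type*} [NormedAddCommGroup H] [InnerProductSpace ℂ H] [CompleteSpace H]
    (j : A →ₗ[ℂ] H) (hj_dense : DenseRange j)
    (hj_inner : ∀ a b : A, (inner ℂ (j a) (j b) : ℂ) = ω (star a * b))
    -- the system is uniformly asymptotically abelian with respect to (Λ1 n) (ε-form)
    (hcomm_meas : ∀ a b : A, Measurable fun g : G => ‖a * τ g b - τ g b * a‖)
    (hUAA : ∀ a b : A, ∀ ε > (0 : ℝ), ∀ᶠ n in atTop, ∀ h : G,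
      (Measure.count (Λ1 n)).toReal⁻¹ * ∫ g in Λ1 n * {h}, ‖a * τ g b - τ g b * a‖ ∂Measure.count ≤ ε)
 :
    -- conclusion (in ε-form)
    ∀ a b c : A, ∀ ε > (0 : ℝ), ∀ᶠ n in atTop, ∀ g₁ g₂ : G,
      ‖((Measure.count (Λ1 n)).toReal * (Measure.count (Λ2 n)).toReal)⁻¹ •
          (∫ h in Λ1 n * {g₁}, ∫ g in Λ2 n * {g₂},
            j (τ (g * h) a * τ g b * τ h c) ∂Measure.count ∂Measure.count)
        - (ω a * ω b * ω c) • j 1‖ ≤ ε := by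
  let : CStarAlgebra A := {}
  obtain ⟨Λ, hΛmeas, hΛfin, hΛfolner, hΛmix⟩ := hWM
  have hΛ := WeakMixingAverage.isFoelner_of_tendsto_mul_singleton (.of_forall hΛmeas) hΛfin hΛfolner
  have hΛ1 :=
    WeakMixingAverage.isFoelner_of_tendsto_mul_singleton (.of_forall hΛ1meas) hΛ1fin hΛ1folner
  have hΛ2 :=
    WeakMixingAverage.isFoelner_of_tendsto_mul_singleton (.of_forall hΛ2meas) hΛ2fin hΛ2folner
  have hmix := WeakMixingAverage.isWeaklyMixing_of_tendsto_setIntegral hτ_meas hΛ hΛmix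
  exact fun a b c ε hε => prop_5_5_2_general hω_tracial ⟨hτ_mul, hω_inv⟩ hτ_meas hmix
    ⟨hω_one, hj_inner⟩ hΛ1 hΛ2 hcomm_meas hUAA a b c hε
end
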